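/- arXiv:2302.04540 — 3 statements merged into one kernel-verified Lean document; each statement's English description precedes it below -/
import Mathlib

section
/- For every integer d ≥ 9 and all integers n ≥ 4, q ≥ 4 with n + q = d − 1, the compatible couple (Σ_{1,n,q,1}, (1, d−3)) is not realizable; that is, there exists no real polynomial of degree d whose coefficient sign sequence is + followed by n signs −, then q signs +, then one sign −, and which has exactly one positive real root and exactly d−3 negative real roots, all simple, its remaining two roots forming a nonreal complex conjugate pair. -/
/-!
Let `Q` realize the couple. Its real roots are one `a > 0` and `d - 3` negative numbers, so
`Q = G * T`, where `G` is the monic polynomial with these `d - 2` roots and `T` is a real quadratic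
without real roots. Only the coefficients at distance `0`, `1`, `4` from either end of `Q` matter.

Both `Q.reverse` and `Q` have the form `κ * ∏ (1 + y X) * (A + B X + C X²)` with real `y` and
`B² < 4 A C`: the `y` are `-r`, respectively `-1/r`, for `r` running over the real roots. Let `hₖ` be
the coefficients of `∏ (1 + y X)` and `pₖ` the power sums of the `y`.

* `coeff_signs_false`: if `h₁, h₂ ≥ 0`, the first and fourth coefficients cannot both have the sign
  opposite to that of the constant one. With `w = -B/A`, `v = C/A`, these signs mean `h₁ < w` and
  `h₄ - w h₃ + v h₂ < 0`, and `v > w²/4`. The polynomial `w² h₂ / 4 - w h₃ + h₄` is nondecreasing in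
  `w ≥ h₁`, and by Newton's identities its value at `w = h₁` is `(p₁² p₂ + p₂² - 2 p₄) / 8`,
  which is nonnegative since `p₁² ≥ p₂` (this is `h₂ ≥ 0`) and `p₂² ≥ p₄`.
* `quadratic_sums_or`: `h₁, h₂ ≥ 0` holds for the numbers `-r` or for the numbers `-1/r`.
  Otherwise, with `b` running over the absolute values of the negative roots, all the `b` but one
  have sum below `2a`, and all the `1/b` but one have sum below `2/a`; adding `b/a + a/b ≥ 2` over
  the at least four common `b` gives a contradiction.

So the pattern is excluded at its leading end (where `n ≥ 4` provides the signs)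
or at its trailing end (where `q ≥ 4` does).
-/

open Polynomial

/-- Alternating blocks of signs, starting with sign `s`:
`altBlocks [m₁, m₂, …] s` is `m₁` copies of `s` followed by `m₂` copies of `-s`, etc. -/
def altBlocks : List ℕ → ℝ → List ℝ
  | [], _ => []
  | m :: rest, s => List.replicate m s ++ altBlocks rest (-s)

/-- The sign pattern `Σ_{m₁,…,m_s}`: `m₁` signs `+`, then `m₂` signs `-`, then `m₃` signs `+`, … -/
def sigmaPat (blocks : List ℕ) : List ℝ := altBlocks blocks 1

/-- The real polynomial `Q` defines the sign pattern `σ` (signs listed from the leading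
coefficient down to the constant one). -/
def HasSignPattern (Q : Polynomial ℝ) (σ : List ℝ) : Prop :=
  Q.natDegree + 1 = σ.length ∧
  ∀ i : Fin σ.length, σ.get i * Q.coeff (Q.natDegree - (i : ℕ)) > 0

/-- `Q` has exactly `pos` positive real roots and `neg` negative real roots, all of them
simple (its remaining roots are then nonreal). -/
def RootData (Q : Polynomial ℝ) (pos neg : ℕ) : Prop :=
  Q.roots.countP (fun x => 0 < x) = pos ∧
  Q.roots.countP (fun x => x < 0) = neg ∧
  Q.roots.Nodup

/-- The couple `(σ, (pos, neg))` is realizable. -/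
def Realizable (σ : List ℝ) (pos neg : ℕ) : Prop :=
  ∃ Q : Polynomial ℝ, HasSignPattern Q σ ∧ RootData Q pos neg

/-! ### Power sums and the product of the factors `1 + y X` -/

/-- The polynomial `∏ (1 + y X)` over `y ∈ s`; its coefficients are the elementary symmetric
functions of `s`. -/
noncomputable def oneAddProd (s : Multiset ℝ) : Polynomial ℝ :=
  (s.map (fun y => 1 + C y * X)).prod

/-- The `k`-th power sum of `s`. -/
noncomputable def powSum (s : Multiset ℝ) (k : ℕ) : ℝ := (s.map (fun y => y ^ k)).sum

lemma oneAddProd_cons_coeff_zero (a : ℝ) (s : Multiset ℝ) :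
    (oneAddProd (a ::ₘ s)).coeff 0 = (oneAddProd s).coeff 0 := by
  simp [oneAddProd, add_mul, mul_assoc]

lemma oneAddProd_cons_coeff_succ (a : ℝ) (s : Multiset ℝ) (k : ℕ) :
    (oneAddProd (a ::ₘ s)).coeff (k + 1)
      = (oneAddProd s).coeff (k + 1) + a * (oneAddProd s).coeff k := by
  simp [oneAddProd, add_mul, mul_assoc, coeff_X_mul]

lemma powSum_cons (a : ℝ) (s : Multiset ℝ) (k : ℕ) :
    powSum (a ::ₘ s) k = a ^ k + powSum s k := by
  simp [powSum]

/-- Newton's identities in degrees up to four. -/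
lemma oneAddProd_coeff (s : Multiset ℝ) :
    (oneAddProd s).coeff 0 = 1 ∧
    (oneAddProd s).coeff 1 = powSum s 1 ∧
    (oneAddProd s).coeff 2 = (powSum s 1 ^ 2 - powSum s 2) / 2 ∧
    (oneAddProd s).coeff 3
      = (powSum s 1 ^ 3 - 3 * powSum s 1 * powSum s 2 + 2 * powSum s 3) / 6 ∧
    (oneAddProd s).coeff 4
      = (powSum s 1 ^ 4 - 6 * powSum s 1 ^ 2 * powSum s 2 + 3 * powSum s 2 ^ 2
          + 8 * powSum s 1 * powSum s 3 - 6 * powSum s 4) / 24 := by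
  induction s using Multiset.induction with
  | empty => simp [oneAddProd, powSum, coeff_one]
  | cons a s ih =>
    obtain ⟨h0, h1, h2, h3, h4⟩ := ih
    have e1 := oneAddProd_cons_coeff_succ a s 0
    have e2 := oneAddProd_cons_coeff_succ a s 1
    have e3 := oneAddProd_cons_coeff_succ a s 2
    have e4 := oneAddProd_cons_coeff_succ a s 3
    norm_num at e1 e2 e3 e4
    rw [oneAddProd_cons_coeff_zero, e1, e2, e3, e4, h0, h1, h2, h3, h4]
    simp only [powSum_cons]
    refine ⟨trivial, ?_, ?_, ?_, ?_⟩ <;> ring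

/-- If `p₁ ≥ 0` and `p₂ ≤ p₁²`, then every `y ∈ s` satisfies `y² ≤ p₂` and `y ≤ p₁`, which gives
these bounds on the higher power sums. -/
lemma powSum_bounds (s : Multiset ℝ) (h1 : 0 ≤ powSum s 1) (h2 : powSum s 2 ≤ powSum s 1 ^ 2) :
    0 ≤ powSum s 2 ∧ powSum s 3 ≤ powSum s 1 * powSum s 2 ∧ powSum s 4 ≤ powSum s 2 ^ 2 := by
  have hsq : ∀ y ∈ s, y ^ 2 ≤ powSum s 2 := by
    intro y hy
    refine Multiset.single_le_sum ?_ _ (Multiset.mem_map_of_mem (fun y => y ^ 2) hy)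
    intro x hx
    obtain ⟨z, -, rfl⟩ := Multiset.mem_map.1 hx
    positivity
  refine ⟨?_, ?_, ?_⟩
  · refine Multiset.sum_nonneg fun x hx => ?_
    obtain ⟨z, -, rfl⟩ := Multiset.mem_map.1 hx
    positivity
  · unfold powSum at *
    rw [← Multiset.sum_map_mul_left]
    refine Multiset.sum_map_le_sum_map _ _ fun y hy => ?_
    have hy1 : y ≤ (s.map (fun y => y ^ 1)).sum := abs_le_of_sq_le_sq' ((hsq y hy).trans h2) h1 |>.2
    nlinarith [sq_nonneg y]
  · rw [pow_two]
    unfold powSum at *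
    rw [← Multiset.sum_map_mul_left]
    refine Multiset.sum_map_le_sum_map _ _ fun y hy => ?_
    nlinarith [sq_nonneg y, hsq y hy]

/-! ### The obstruction at one end of the coefficient sequence -/

/-- The obstruction in normalized form: `w = -B/A` and `v = C/A` for a quadratic
`A + B X + C X²` without real roots. -/
lemma sign_obstruction (s : Multiset ℝ) (v w : ℝ) (h1 : 0 ≤ powSum s 1)
    (h2 : powSum s 2 ≤ powSum s 1 ^ 2) (hvw : w ^ 2 < 4 * v)
    (hw : (oneAddProd s).coeff 1 < w) :
    0 ≤ (oneAddProd s).coeff 4 - w * (oneAddProd s).coeff 3 + v * (oneAddProd s).coeff 2 := by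
  obtain ⟨-, e1, e2, e3, e4⟩ := oneAddProd_coeff s
  obtain ⟨b2, b3, b4⟩ := powSum_bounds s h1 h2
  rw [e1] at hw
  rw [e2, e3, e4]
  generalize powSum s 1 = p1 at *
  generalize powSum s 2 = p2 at *
  generalize powSum s 3 = p3 at *
  generalize powSum s 4 = p4 at *
  set H2 := (p1 ^ 2 - p2) / 2 with hH2
  set H3 := (p1 ^ 3 - 3 * p1 * p2 + 2 * p3) / 6 with hH3
  set H4 := (p1 ^ 4 - 6 * p1 ^ 2 * p2 + 3 * p2 ^ 2 + 8 * p1 * p3 - 6 * p4) / 24 with hH4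
  have hH2n : 0 ≤ H2 := by rw [hH2]; linarith
  have hmono : 0 ≤ p1 * H2 / 2 - H3 := by
    have : 0 ≤ p1 * (p1 ^ 2 - p2) := mul_nonneg h1 (by linarith)
    rw [hH2, hH3]; nlinarith
  have hval : p1 ^ 2 * H2 / 4 - p1 * H3 + H4 = (p1 ^ 2 * p2 + p2 ^ 2 - 2 * p4) / 8 := by
    rw [hH2, hH3, hH4]; ring
  have hval0 : 0 ≤ p1 ^ 2 * H2 / 4 - p1 * H3 + H4 := by
    rw [hval]; nlinarith [mul_le_mul_of_nonneg_right h2 b2]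
  have hv : 0 ≤ (v - w ^ 2 / 4) * H2 := mul_nonneg (by linarith) hH2n
  have hstep : 0 ≤ (w - p1) * ((w - p1) * H2 / 4 + (p1 * H2 / 2 - H3)) := by
    refine mul_nonneg (by linarith) (add_nonneg ?_ hmono)
    have := mul_nonneg (sub_nonneg.2 hw.le) hH2n
    linarith
  nlinarith

/-- A polynomial `κ * ∏ (1 + y X) * (A + B X + C X²)`, with the quadratic factor free of real
roots and `h₁, h₂ ≥ 0`, cannot have its coefficients `1` and `4` both of sign opposite to the
constant one. -/
lemma coeff_signs_false (s : Multiset ℝ) (κ A B D : ℝ) (Z : Polynomial ℝ)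
    (hZ : Z = C κ * oneAddProd s * (C A + C B * X + C D * X ^ 2))
    (h1 : 0 ≤ powSum s 1) (h2 : powSum s 2 ≤ powSum s 1 ^ 2) (hdisc : B ^ 2 < 4 * A * D)
    (hz1 : Z.coeff 0 * Z.coeff 1 < 0) (hz4 : Z.coeff 0 * Z.coeff 4 < 0) : False := by
  have hZ' : Z = C (κ * A) * oneAddProd s + C (κ * B) * (oneAddProd s * X)
      + C (κ * D) * (oneAddProd s * X ^ 2) := by
    rw [hZ]; simp only [C_mul]; ring
  have e0 : (oneAddProd s).coeff 0 = 1 := (oneAddProd_coeff s).1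
  have z0 : Z.coeff 0 = κ * A := by
    rw [hZ']; simp [e0, mul_assoc, pow_two]
  have z1 : Z.coeff 1 = κ * A * (oneAddProd s).coeff 1 + κ * B := by
    rw [hZ']
    simp only [coeff_add, coeff_C_mul, coeff_mul_X_pow']
    rw [show (1 : ℕ) = 0 + 1 from rfl, coeff_mul_X, e0]
    simp
  have z4 : Z.coeff 4 = κ * A * (oneAddProd s).coeff 4 + κ * B * (oneAddProd s).coeff 3
      + κ * D * (oneAddProd s).coeff 2 := by
    rw [hZ']
    simp only [coeff_add, coeff_C_mul, coeff_mul_X_pow']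
    rw [show (4 : ℕ) = 3 + 1 from rfl, coeff_mul_X]
    simp
  have hκA : κ * A ≠ 0 := by
    intro h; rw [z0, h] at hz1; simp at hz1
  have hA : A ≠ 0 := right_ne_zero_of_mul hκA
  have hpos : 0 < (κ * A) ^ 2 := by positivity
  have hw : (oneAddProd s).coeff 1 < -B / A := by
    have : Z.coeff 0 * Z.coeff 1 = (κ * A) ^ 2 * ((oneAddProd s).coeff 1 - -B / A) := by
      rw [z0, z1]; field_simp; ring
    rw [this] at hz1
    linarith [(pos_iff_neg_of_mul_neg hz1).1 hpos]
  have hvw : (-B / A) ^ 2 < 4 * (D / A) := by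
    have hA2 : 0 < A ^ 2 := by positivity
    rw [div_pow, div_lt_iff₀ hA2]
    have : 4 * (D / A) * A ^ 2 = 4 * A * D := by field_simp
    rw [this]; linarith [neg_sq B]
  have hmain := sign_obstruction s (D / A) (-B / A) h1 h2 hvw hw
  have : Z.coeff 0 * Z.coeff 4 = (κ * A) ^ 2 * ((oneAddProd s).coeff 4
      - -B / A * (oneAddProd s).coeff 3 + D / A * (oneAddProd s).coeff 2) := by
    rw [z0, z4]; field_simp; ring
  rw [this] at hz4
  exact absurd hz4 (not_lt.2 (mul_nonneg hpos.le hmain))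

/-! ### One of the two ends satisfies the hypotheses -/

/-- If `e₂ < a e₁` for positive numbers, then all of them but one have sum below `2a`. -/
lemma exists_sum_erase_lt (M : Multiset ℝ) (f : ℝ → ℝ) (hM : ∀ b ∈ M, 0 < f b) (a : ℝ)
    (h : (M.map f).sum ^ 2 - (M.map (fun b => f b ^ 2)).sum < 2 * a * (M.map f).sum) :
    ∃ b ∈ M, ((M.erase b).map f).sum < 2 * a := by
  by_contra! hcon
  set S := (M.map f).sum with hS
  have key : (M.map (fun b => 2 * a * f b)).sum ≤ (M.map (fun b => S * f b - f b ^ 2)).sum := by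
    refine Multiset.sum_map_le_sum_map _ _ fun b hb => ?_
    have h3 : f b + ((M.erase b).map f).sum = S := by
      rw [hS]; conv_rhs => rw [← Multiset.cons_erase hb]
      simp
    have := hcon b hb
    nlinarith [hM b hb]
  rw [Multiset.sum_map_mul_left, Multiset.sum_map_sub, Multiset.sum_map_mul_left, ← hS] at key
  nlinarith

lemma sum_map_le_of_le {N K : Multiset ℝ} (h : N ≤ K) (f : ℝ → ℝ) (hf : ∀ b ∈ K, 0 < f b) :
    (N.map f).sum ≤ (K.map f).sum := by
  obtain ⟨L, rfl⟩ := Multiset.le_iff_exists_add.1 h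
  rw [Multiset.map_add, Multiset.sum_add]
  refine le_add_of_nonneg_right (Multiset.sum_nonneg fun x hx => ?_)
  obtain ⟨z, hz, rfl⟩ := Multiset.mem_map.1 hx
  exact (hf z (Multiset.mem_add.2 (Or.inr hz))).le

/-- For at least six positive numbers `b` and `a > 0`: `e₂(b) ≥ a e₁(b)` or
`e₂(1/b) ≥ a⁻¹ e₁(1/b)`. -/
lemma quadratic_sums_or (M : Multiset ℝ) (hM : ∀ b ∈ M, 0 < b) (hcard : 6 ≤ M.card) (a : ℝ)
    (ha : 0 < a) :
    2 * a * (M.map (fun b => b)).sum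
      ≤ (M.map (fun b => b)).sum ^ 2 - (M.map (fun b => b ^ 2)).sum ∨
    2 * a⁻¹ * (M.map (fun b => b⁻¹)).sum
      ≤ (M.map (fun b => b⁻¹)).sum ^ 2 - (M.map (fun b => b⁻¹ ^ 2)).sum := by
  by_contra! hcon
  obtain ⟨b, hb, hbs⟩ := exists_sum_erase_lt M (fun b => b) hM a hcon.1
  obtain ⟨c, hc, hcs⟩ := exists_sum_erase_lt M (fun b => b⁻¹)
    (fun b hb => inv_pos.2 (hM b hb)) a⁻¹ hcon.2
  set N := (M.erase b).erase c with hN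
  have hNb : N ≤ M.erase b := Multiset.erase_le _ _
  have hNc : N ≤ M.erase c := by
    rw [hN, Multiset.erase_comm]; exact Multiset.erase_le _ _
  have hNM : N ≤ M := hNb.trans (Multiset.erase_le _ _)
  have hcardN : 4 ≤ N.card := by
    have i1 := Multiset.card_erase_of_mem hb
    have i2 : (M.erase b).card ≤ N.card + 1 := by
      have := Multiset.card_erase_add_one (a := c) (s := M.erase b)
      by_cases hcb : c ∈ M.erase b
      · rw [hN, this hcb]
      · rw [hN, Multiset.erase_of_notMem hcb]; omega
    rw [Nat.pred_eq_sub_one] at i1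
    omega
  have s1 : (N.map (fun b => b)).sum < 2 * a :=
    (sum_map_le_of_le hNb _ fun x hx => hM x (Multiset.mem_of_mem_erase hx)).trans_lt hbs
  have s2 : (N.map (fun b => b⁻¹)).sum < 2 * a⁻¹ :=
    (sum_map_le_of_le hNc _ fun x hx =>
      inv_pos.2 (hM x (Multiset.mem_of_mem_erase hx))).trans_lt hcs
  have s3 : (N.map (fun _ => (2 : ℝ))).sum ≤ (N.map (fun b => a⁻¹ * b + a * b⁻¹)).sum := by
    refine Multiset.sum_map_le_sum_map _ _ fun x hx => ?_
    have hx0 : 0 < x := hM x (Multiset.mem_of_le hNM hx)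
    have : a⁻¹ * x + a * x⁻¹ - 2 = (x - a) ^ 2 / (a * x) := by field_simp; ring
    have : 0 ≤ (x - a) ^ 2 / (a * x) := by positivity
    linarith
  rw [Multiset.sum_map_add, Multiset.sum_map_mul_left, Multiset.sum_map_mul_left] at s3
  simp only [Multiset.map_const', Multiset.sum_replicate, nsmul_eq_mul] at s3
  have t1 : a⁻¹ * (N.map (fun b => b)).sum < 2 := by
    have := mul_lt_mul_of_pos_left s1 (inv_pos.2 ha)
    rwa [show a⁻¹ * (2 * a) = 2 by field_simp] at this
  have t2 : a * (N.map (fun b => b⁻¹)).sum < 2 := by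
    have := mul_lt_mul_of_pos_left s2 ha
    rwa [show a * (2 * a⁻¹) = 2 by field_simp] at this
  have : (4 : ℝ) ≤ N.card := by exact_mod_cast hcardN
  linarith

/-- The inequality `e₂ ≥ a e₁` gives `h₁, h₂ ≥ 0` for the numbers `-a` and `f b`, `b ∈ M`. -/
lemma powSum_cons_bounds (M : Multiset ℝ) (f : ℝ → ℝ) (hM : ∀ b ∈ M, 0 < f b) (a : ℝ)
    (ha : 0 < a)
    (h : 2 * a * (M.map f).sum ≤ (M.map f).sum ^ 2 - (M.map (fun b => f b ^ 2)).sum)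
    (hne : M ≠ 0) :
    0 ≤ powSum (-a ::ₘ M.map f) 1 ∧
      powSum (-a ::ₘ M.map f) 2 ≤ powSum (-a ::ₘ M.map f) 1 ^ 2 := by
  have hS : 0 < (M.map f).sum := by
    obtain ⟨b, hb⟩ := Multiset.exists_mem_of_ne_zero hne
    refine (hM b hb).trans_le (Multiset.single_le_sum ?_ _ (Multiset.mem_map_of_mem f hb))
    intro x hx
    obtain ⟨z, hz, rfl⟩ := Multiset.mem_map.1 hx
    exact (hM z hz).le
  have hS2 : 0 ≤ (M.map (fun b => f b ^ 2)).sum := by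
    refine Multiset.sum_nonneg fun x hx => ?_
    obtain ⟨z, -, rfl⟩ := Multiset.mem_map.1 hx
    positivity
  have p1 : powSum (-a ::ₘ M.map f) 1 = -a + (M.map f).sum := by
    simp [powSum]
  have p2 : powSum (-a ::ₘ M.map f) 2 = a ^ 2 + (M.map (fun b => f b ^ 2)).sum := by
    simp [powSum]
  rw [p1, p2]
  constructor
  · have : 2 * a ≤ (M.map f).sum := le_of_mul_le_mul_right (by nlinarith) hS
    linarith
  · nlinarith

/-! ### Factorization of `Q` and its reverse -/

lemma reverse_prod_X_sub_C (s : Multiset ℝ) :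
    ((s.map (fun r => X - C r)).prod).reverse = oneAddProd (s.map (fun r => -r)) := by
  induction s using Multiset.induction with
  | empty => simp [oneAddProd, ← C_1, -map_one]
  | cons a s ih =>
    have hrev : (X - C a : Polynomial ℝ).reverse = 1 + C (-a) * X := by
      have := reverse_add_C (X : Polynomial ℝ) (-a)
      have h1 : (X : Polynomial ℝ).reverse = 1 := by
        rw [← one_mul (X : Polynomial ℝ), reverse_mul_X, ← C_1, reverse_C]
      simpa [h1, sub_eq_add_neg] using this
    simp only [Multiset.map_cons, Multiset.prod_cons, reverse_mul_of_domain, ih, hrev, oneAddProd]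

lemma prod_X_sub_C_eq (s : Multiset ℝ) (hs : ∀ r ∈ s, r ≠ 0) :
    ∃ κ : ℝ, (s.map (fun r => X - C r)).prod = C κ * oneAddProd (s.map (fun r => -r⁻¹)) := by
  induction s using Multiset.induction with
  | empty => exact ⟨1, by simp [oneAddProd]⟩
  | cons a s ih =>
    obtain ⟨κ, hκ⟩ := ih fun r hr => hs r (Multiset.mem_cons_of_mem hr)
    have ha : a ≠ 0 := hs a (Multiset.mem_cons_self a s)
    refine ⟨-a * κ, ?_⟩
    have hlin : (X - C a : Polynomial ℝ) = C (-a) * (1 + C (-a⁻¹) * X) := by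
      rw [mul_add, ← mul_assoc, ← C_mul, show -a * -a⁻¹ = 1 by field_simp]
      simp; ring
    simp only [Multiset.map_cons, Multiset.prod_cons, hκ, oneAddProd]
    rw [hlin, C_mul]; ring

lemma disc_neg_of_roots_eq_zero (T : Polynomial ℝ) (hdeg : T.natDegree = 2) (hT : T.roots = 0) :
    T.coeff 1 ^ 2 < 4 * T.coeff 0 * T.coeff 2 := by
  by_contra! hcon
  have hT0 : T ≠ 0 := by rintro rfl; simp at hdeg
  have hlead : T.coeff 2 ≠ 0 := by
    rw [← hdeg]; exact leadingCoeff_ne_zero.2 hT0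
  obtain ⟨x, hx⟩ := exists_quadratic_eq_zero (a := T.coeff 2) (b := T.coeff 1) (c := T.coeff 0)
    hlead ⟨√(discrim (T.coeff 2) (T.coeff 1) (T.coeff 0)), by
      rw [Real.mul_self_sqrt]; unfold discrim; linarith⟩
  have : x ∈ T.roots := by
    rw [mem_roots hT0, IsRoot, eval_eq_sum_range, hdeg]
    simp [Finset.sum_range_succ]; linarith
  simp [hT] at this

lemma reverse_of_natDegree_two (T : Polynomial ℝ) (hdeg : T.natDegree = 2) :
    T.reverse = C (T.coeff 2) + C (T.coeff 1) * X + C (T.coeff 0) * X ^ 2 := by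
  ext i
  rw [coeff_reverse, hdeg]
  rcases Nat.lt_or_ge 2 i with hi | hi
  · rw [revAt_eq_self_of_lt hi, coeff_eq_zero_of_natDegree_lt (by omega)]
    rw [coeff_add, coeff_add, coeff_C_mul_X_pow, coeff_C_mul_X, coeff_C]
    simp [show i ≠ 0 by omega, show i ≠ 1 by omega, show i ≠ 2 by omega]
  · rw [revAt_le hi]
    interval_cases i <;> simp [coeff_X, coeff_C, coeff_X_pow]

/-- The real roots split as the positive one and the negatives of a multiset of positive numbers. -/
lemma roots_split (R : Multiset ℝ) (h0 : (0 : ℝ) ∉ R) (k : ℕ)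
    (hpos : R.countP (fun x => 0 < x) = 1) (hneg : R.countP (fun x => x < 0) = k) :
    ∃ a : ℝ, 0 < a ∧ ∃ M : Multiset ℝ, (∀ b ∈ M, 0 < b) ∧ M.card = k ∧
      R = a ::ₘ M.map (fun b => -b) := by
  rw [Multiset.countP_eq_card_filter] at hpos hneg
  obtain ⟨a, ha⟩ := Multiset.card_eq_one.1 hpos
  have ha0 : 0 < a := by
    have : a ∈ R.filter (fun x => 0 < x) := by rw [ha]; simp
    exact (Multiset.mem_filter.1 this).2
  refine ⟨a, ha0, (R.filter (fun x => x < 0)).map (fun b => -b), ?_, by simpa using hneg, ?_⟩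
  · intro b hb
    obtain ⟨z, hz, rfl⟩ := Multiset.mem_map.1 hb
    linarith [(Multiset.mem_filter.1 hz).2]
  · have hnot : R.filter (fun x => ¬ 0 < x) = R.filter (fun x => x < 0) := by
      refine Multiset.filter_congr fun x hx => ?_
      have : x ≠ 0 := fun h => h0 (h ▸ hx)
      constructor
      · intro h; exact lt_of_le_of_ne (not_lt.1 h) this
      · intro h; exact not_lt.2 h.le
    have := Multiset.filter_add_not (fun x => 0 < x) R
    rw [ha, hnot] at this
    rw [Multiset.map_map]
    simp only [Function.comp_def, neg_neg, Multiset.map_id']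
    conv_lhs => rw [← this, Multiset.singleton_add]

/-! ### The sign pattern -/

lemma sigmaPat_signs (n q : ℕ) (hn : 4 ≤ n) (hq : 4 ≤ q) (Q : Polynomial ℝ)
    (h : HasSignPattern Q (sigmaPat [1, n, q, 1])) :
    Q.natDegree = n + q + 1 ∧
    0 < Q.coeff Q.natDegree ∧ Q.coeff (Q.natDegree - 1) < 0 ∧ Q.coeff (Q.natDegree - 4) < 0 ∧
    Q.coeff 0 < 0 ∧ 0 < Q.coeff 1 ∧ 0 < Q.coeff 4 := by
  obtain ⟨hlen, hs⟩ := h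
  have hL : (sigmaPat [1, n, q, 1]).length = n + q + 2 := by
    simp [sigmaPat, altBlocks]; omega
  have hdeg : Q.natDegree = n + q + 1 := by omega
  have hget : ∀ i (hi : i < n + q + 2), 0 < (sigmaPat [1, n, q, 1])[i]'(by omega) *
      Q.coeff (Q.natDegree - i) := fun i hi => hs ⟨i, by omega⟩
  have hS : sigmaPat [1, n, q, 1]
      = [1] ++ (List.replicate n (-1) ++ (List.replicate q 1 ++ [-1])) := by
    simp [sigmaPat, altBlocks]
  simp only [hS, List.getElem_append, List.getElem_replicate, List.length_replicate,
    List.length_cons, List.length_nil] at hget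
  have g0 := hget 0 (by omega)
  have g1 := hget 1 (by omega)
  have g4 := hget 4 (by omega)
  have k0 := hget (n + q + 1) (by omega)
  have k1 := hget (n + q) (by omega)
  have k4 := hget (n + q - 3) (by omega)
  rw [hdeg] at g0 g1 g4 k0 k1 k4 ⊢
  rw [dif_pos (by omega)] at g0
  rw [dif_neg (by omega), dif_pos (by omega)] at g1 g4
  rw [dif_neg (by omega), dif_neg (by omega), dif_neg (by omega)] at k0
  rw [dif_neg (by omega), dif_neg (by omega), dif_pos (by omega)] at k1 k4
  rw [show n + q + 1 - (n + q + 1) = 0 by omega] at k0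
  rw [show n + q + 1 - (n + q) = 1 by omega] at k1
  rw [show n + q + 1 - (n + q - 3) = 4 by omega] at k4
  simp only [List.getElem_singleton, Nat.sub_zero] at g0 k0
  exact ⟨rfl, by linarith, by linarith, by linarith, by linarith, by linarith, by linarith⟩

/-- For every `d ≥ 9` and `n, q ≥ 4` with `n + q = d - 1`, the couple
`(Σ_{1,n,q,1}, (1, d-3))` is not realizable. -/
theorem stmt0 (d n q : ℕ) (hd : 9 ≤ d) (hn : 4 ≤ n) (hq : 4 ≤ q) (hnq : n + q = d - 1) :
    ¬ Realizable (sigmaPat [1, n, q, 1]) 1 (d - 3) := by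
  rintro ⟨Q, hpat, hpos, hneg, -⟩
  obtain ⟨hdeg, g0, g1, g4, k0, k1, k4⟩ := sigmaPat_signs n q hn hq Q hpat
  have hQ0 : Q ≠ 0 := by rintro rfl; simp at hdeg
  have hzero : (0 : ℝ) ∉ Q.roots := by
    intro h
    have := (mem_roots hQ0).1 h
    rw [IsRoot, ← coeff_zero_eq_eval_zero] at this
    linarith
  obtain ⟨a, ha, M, hM, hcard, hroots⟩ := roots_split Q.roots hzero _ hpos hneg
  obtain ⟨T, hQT, hTdeg, hTroots⟩ := exists_prod_multiset_X_sub_C_mul Q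
  have hRcard : Q.roots.card = d - 2 := by
    rw [hroots, Multiset.card_cons, Multiset.card_map, hcard]; omega
  have hT2 : T.natDegree = 2 := by omega
  have hdisc := disc_neg_of_roots_eq_zero T hT2 hTroots
  have hTeq : T = C (T.coeff 0) + C (T.coeff 1) * X + C (T.coeff 2) * X ^ 2 := by
    conv_lhs => rw [T.as_sum_range_C_mul_X_pow, hT2]
    simp [Finset.sum_range_succ]
  have hMne : M ≠ 0 := by rintro rfl; simp at hcard; omega
  rcases quadratic_sums_or M hM (by omega) a ha with h | h
  · -- The leading end: the coefficients of `Q.reverse`.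
    obtain ⟨h1, h2⟩ := powSum_cons_bounds M (fun b => b) hM a ha h hMne
    have hrev : Q.reverse = C 1 * oneAddProd (-a ::ₘ M.map (fun b => b)) *
        (C (T.coeff 2) + C (T.coeff 1) * X + C (T.coeff 0) * X ^ 2) := by
      rw [← hQT, reverse_mul_of_domain, reverse_prod_X_sub_C, hroots]
      rw [reverse_of_natDegree_two T hT2]
      simp
    have hc : ∀ i, i ≤ Q.natDegree → Q.reverse.coeff i = Q.coeff (Q.natDegree - i) := by
      intro i hi
      rw [coeff_reverse, revAt_le hi]
    refine coeff_signs_false _ _ _ _ _ _ hrev h1 h2 (by linarith) ?_ ?_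
    · rw [hc 0 (by omega), hc 1 (by omega)]; exact mul_neg_of_pos_of_neg g0 g1
    · rw [hc 0 (by omega), hc 4 (by omega)]; exact mul_neg_of_pos_of_neg g0 g4
  · -- The trailing end: the coefficients of `Q` itself.
    obtain ⟨h1, h2⟩ := powSum_cons_bounds M (fun b => b⁻¹) (fun b hb => inv_pos.2 (hM b hb))
      a⁻¹ (inv_pos.2 ha) h hMne
    obtain ⟨κ, hκ⟩ := prod_X_sub_C_eq Q.roots fun r hr h => hzero (h ▸ hr)
    have hQ : Q = C κ * oneAddProd (-a⁻¹ ::ₘ M.map (fun b => b⁻¹)) *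
        (C (T.coeff 0) + C (T.coeff 1) * X + C (T.coeff 2) * X ^ 2) := by
      rw [← hTeq]
      conv_lhs => rw [← hQT, hκ, hroots]
      simp [inv_neg]
    exact coeff_signs_false _ _ _ _ _ _ hQ h1 h2 hdisc
      (mul_neg_of_neg_of_pos k0 k1) (mul_neg_of_neg_of_pos k0 k4)
end

section
/- For every integer d with 10 ≤ d ≤ 14, every compatible couple (σ, (pos, neg)) of degree d with pos ≥ 2 and neg ≥ 2 is realizable, with the possible exception, when d = 14, of the couples in the Z_2×Z_2-orbit of (Σ_{1,4,5,4,1}, (2, 10)). -/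
/-!
A sign pattern of degree `d` starting with `+` is encoded by the word of length `d` that records,
for consecutive entries, a sign change (`true`) or a sign preservation (`false`). A couple is then a
word together with its deficits `a = (c - pos) / 2` and `b = (p - neg) / 2`.

The main tool is concatenation (`WordRealizable.append`): if `P` and `R` realize `u` and `v`, then
`P(εx) R(x)` realizes `u ++ v` for small `ε > 0`, and the deficits add up. Hence it suffices to cut
every word of length 10 to 14, with every admissible pair of deficits leaving at least two positive
and two negative roots, into blocks that are realized by explicit polynomials. Nine polynomials,
together with their images under `x ↦ -x` and reversal, are enough (`baseBlocks`): they are products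
of linear factors and of quadratic factors with negative discriminant, so that only the signs of
the expanded coefficients have to be checked (`Block.Ok.realizable`). Most of them have degree at
most 7; two, of degrees 13 and 14, are close relatives of the exceptional couple, which is the only
one up to symmetry that is not reached.

That the blocks suffice is a computation (`checkTree_blockTrie`). For each word the set of deficits
reached is stored as the binary digits of a natural number, digit `8a + b` standing for `(a, b)`;
it is the union, over the blocks that are prefixes of the word, of the shifted sets of the remaining
suffixes. `checkTree_sound` says that the computation proves what it should.
-/

open Polynomial

/-- `σ` is a genuine sign pattern: it begins with `+` and all its entries are `±1`. -/
def IsSignPatternList (σ : List ℝ) : Prop :=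
  σ.head? = some 1 ∧ ∀ s ∈ σ, s = 1 ∨ s = -1

/-- Number of sign changes in the string `σ`. -/
noncomputable def signChanges (σ : List ℝ) : ℕ := (σ.zip σ.tail).countP (fun p => p.1 * p.2 < 0)

/-- `(pos, neg)` is admissible for the sign pattern `σ` (Descartes' rule of signs). -/
def Admissible (σ : List ℝ) (pos neg : ℕ) : Prop :=
  pos ≤ signChanges σ ∧ neg ≤ (σ.length - 1) - signChanges σ ∧
  Even (signChanges σ - pos) ∧ Even ((σ.length - 1) - signChanges σ - neg)

/-- A couple: a sign pattern together with the pair `(pos, neg)`. -/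
abbrev Couple := List ℝ × ℕ × ℕ

/-- The involution `i_m` on sign patterns: `σ(Q) ↦ (-1)^d σ(Q(-x))`. -/
def imPat (σ : List ℝ) : List ℝ := σ.mapIdx fun i s => (-1 : ℝ) ^ i * s

/-- The involution `i_r` on sign patterns: `σ(Q) ↦ σ(x^d Q(1/x) / Q(0))`. -/
def irPat (σ : List ℝ) : List ℝ := σ.reverse.map fun s => σ.getLastD 1 * s

/-- `i_m` on couples: it swaps `pos` and `neg`. -/
def imC (C : Couple) : Couple := (imPat C.1, C.2.2, C.2.1)

/-- `i_r` on couples: it preserves `(pos, neg)`. -/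
def irC (C : Couple) : Couple := (irPat C.1, C.2.1, C.2.2)

/-- `D` lies in the `ℤ₂ × ℤ₂`-orbit of `C`. -/
def SameOrbit (C D : Couple) : Prop :=
  D = C ∨ D = imC C ∨ D = irC C ∨ D = imC (irC C)

/-! ### Words, deficits and realizability -/

/-- Sign of the `i`-th entry of the sign pattern of the word `w`, the `0`-th entry being `+`. A word
records the pattern by its consecutive pairs: `true` is a sign change, `false` a preservation. -/
def wordSign : List Bool → ℕ → ℝ
  | _, 0 => 1
  | [], _ + 1 => 1
  | x :: w, i + 1 => (if x then -1 else 1) * wordSign w i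

/-- The word `w` is realized by a polynomial with `a` pairs of positive and `b` pairs of negative
roots fewer than the maximum that Descartes' rule allows. -/
def WordRealizable (w : List Bool) (a b : ℕ) : Prop :=
  ∃ Q : ℝ[X], Q.natDegree = w.length ∧
    (∀ i ≤ w.length, 0 < wordSign w i * Q.coeff (w.length - i)) ∧
    Q.roots.countP (fun x => 0 < x) + 2 * a = w.count true ∧
    Q.roots.countP (fun x => x < 0) + 2 * b = w.count false ∧
    Q.roots.Nodup

theorem wordSign_append_left (u v : List Bool) (i : ℕ) (hi : i ≤ u.length) :
    wordSign (u ++ v) i = wordSign u i := by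
  induction u generalizing i with
  | nil =>
    obtain rfl : i = 0 := by simpa using hi
    cases v <;> rfl
  | cons x u ih =>
    cases i with
    | zero => rfl
    | succ i => simp [wordSign, ih i (by simpa using hi)]

theorem wordSign_append_right (u v : List Bool) (i : ℕ) :
    wordSign (u ++ v) (u.length + i) = wordSign u u.length * wordSign v i := by
  induction u with
  | nil => cases v <;> cases i <;> simp [wordSign]
  | cons x u ih =>
    rw [List.length_cons, Nat.add_right_comm]
    simp [wordSign, ih]

/-! ### Concatenation -/

open Filter Topology in
/-- The lowest-order term in `ε` of each coefficient of `P(εx) R(x)` is a single product of a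
coefficient of `P` and a coefficient of `R`; it dictates the sign for small `ε`. -/
theorem eventually_coeff_pos (P R : ℝ[X]) (k : ℕ) (s : ℝ)
    (h : 0 < s * (P.coeff (k - R.natDegree) * R.coeff (k - (k - R.natDegree)))) :
    ∀ᶠ ε in 𝓝[>] (0 : ℝ), 0 < s * (P.comp (C ε * X) * R).coeff k := by
  set m := k - R.natDegree with hm
  let g : ℝ → ℝ := fun ε =>
    s * ∑ x ∈ Finset.HasAntidiagonal.antidiagonal k, P.coeff x.1 * R.coeff x.2 * ε ^ (x.1 - m)
  have hg0 : 0 < g 0 := by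
    have : ∑ x ∈ Finset.HasAntidiagonal.antidiagonal k,
        P.coeff x.1 * R.coeff x.2 * (0 : ℝ) ^ (x.1 - m) = P.coeff m * R.coeff (k - m) := by
      rw [Finset.sum_eq_single (m, k - m)]
      · simp
      · rintro ⟨i, j⟩ hij hne
        rw [Finset.HasAntidiagonal.mem_antidiagonal] at hij
        simp only at hij ⊢
        rcases lt_trichotomy i m with h1 | h1 | h1
        · rw [coeff_eq_zero_of_natDegree_lt (p := R) (by omega)]; simp
        · exact absurd (by ext <;> simp <;> omega) hne
        · rw [zero_pow (by omega)]; simp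
      · intro hn
        exact absurd (Finset.HasAntidiagonal.mem_antidiagonal.2 (by simp; omega)) hn
    simpa only [g, this] using h
  have hcont : Continuous g := by fun_prop
  have hev : ∀ᶠ ε in 𝓝[>] (0 : ℝ), 0 < g ε :=
    (hcont.continuousAt.eventually (lt_mem_nhds hg0)).filter_mono nhdsWithin_le_nhds
  filter_upwards [hev, self_mem_nhdsWithin] with ε hε hpos
  have hpos : 0 < ε := hpos
  have : (P.comp (C ε * X) * R).coeff k = ε ^ m *
      ∑ x ∈ Finset.HasAntidiagonal.antidiagonal k, P.coeff x.1 * R.coeff x.2 * ε ^ (x.1 - m) := by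
    rw [coeff_mul, Finset.mul_sum]
    refine Finset.sum_congr rfl ?_
    rintro ⟨i, j⟩ hij
    rw [Finset.HasAntidiagonal.mem_antidiagonal] at hij
    simp only at hij ⊢
    rw [comp_C_mul_X_coeff]
    rcases lt_or_ge i m with h1 | h1
    · rw [coeff_eq_zero_of_natDegree_lt (p := R) (by omega)]; simp
    · obtain ⟨t, rfl⟩ := Nat.exists_eq_add_of_le h1
      rw [Nat.add_sub_cancel_left, pow_add]; ring
  rw [this, mul_left_comm]
  exact mul_pos (pow_pos hpos m) hε

open Filter Topology in
/-- Realizability is closed under concatenation of words: if `P` and `R` realize `u` and `v`, then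
`P(εx) R(x)` realizes `u ++ v` for small `ε > 0`. -/
theorem WordRealizable.append {u v : List Bool} {a b a' b' : ℕ}
    (hu : WordRealizable u a b) (hv : WordRealizable v a' b') :
    WordRealizable (u ++ v) (a + a') (b + b') := by
  obtain ⟨P, hPd, hPs, hPp, hPn, hPr⟩ := hu
  obtain ⟨R, hRd, hRs, hRp, hRn, hRr⟩ := hv
  have hP0 : P.coeff 0 ≠ 0 := by
    have := hPs u.length le_rfl
    rw [Nat.sub_self] at this
    exact right_ne_zero_of_mul this.ne'
  have hPne : P ≠ 0 := fun h => hP0 (by simp [h])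
  have hRne : R ≠ 0 := by
    rintro rfl
    simpa using hRs 0 (Nat.zero_le _)
  have hcoef : ∀ᶠ ε in 𝓝[>] (0 : ℝ), ∀ i ∈ Finset.range ((u ++ v).length + 1),
      0 < wordSign (u ++ v) i * (P.comp (C ε * X) * R).coeff ((u ++ v).length - i) := by
    rw [eventually_all_finset]
    intro i hi
    rw [Finset.mem_range, List.length_append] at hi
    apply eventually_coeff_pos
    rw [List.length_append, hRd]
    rcases le_or_gt i u.length with h | h
    · rw [wordSign_append_left _ _ _ h]
      have h1 := hPs i h
      have h2 := hRs 0 (Nat.zero_le _)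
      have e1 : u.length + v.length - i - v.length = u.length - i := by omega
      have e2 : u.length + v.length - i - (u.length - i) = v.length - 0 := by omega
      rw [e1, e2, ← mul_assoc]
      refine mul_pos h1 ?_
      simpa [wordSign] using h2
    · obtain ⟨t, rfl⟩ := Nat.exists_eq_add_of_le h.le
      rw [wordSign_append_right]
      have h1 := hPs u.length le_rfl
      have h2 := hRs t (by omega)
      have e1 : u.length + v.length - (u.length + t) - v.length = u.length - u.length := by omega
      have e2 : u.length + v.length - (u.length + t) - (u.length - u.length) = v.length - t := by
        omega
      rw [e1, e2, mul_mul_mul_comm]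
      exact mul_pos h1 h2
  -- The roots of `P` are nonzero, so those of `P(εx)` move away from the roots of `R`.
  have hdisj : ∀ᶠ ε in 𝓝[>] (0 : ℝ), ∀ r ∈ P.roots.toFinset, ∀ s ∈ R.roots.toFinset,
      ε * s ≠ r := by
    rw [eventually_all_finset]
    intro r hr
    rw [eventually_all_finset]
    intro s _
    have hr0 : r ≠ 0 := by
      rintro rfl
      rw [Multiset.mem_toFinset, mem_roots hPne, IsRoot, ← coeff_zero_eq_eval_zero] at hr
      exact hP0 hr
    have hc : ContinuousAt (fun ε : ℝ => ε * s) 0 := by fun_prop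
    have : ∀ᶠ y in 𝓝 ((0 : ℝ) * s), y ≠ r := by
      rw [zero_mul]
      exact isOpen_ne.mem_nhds hr0.symm
    exact (hc.eventually this).filter_mono nhdsWithin_le_nhds
  obtain ⟨ε, hε1, hε2, hε0⟩ := (hcoef.and (hdisj.and self_mem_nhdsWithin)).exists
  have hε0 : 0 < ε := hε0
  set S := P.comp (C ε * X) with hS
  have hroots : S.roots = P.roots.map (fun x => ε⁻¹ * x) := by
    have := P.roots_comp_C_mul_X_add_C ε 0 (isUnit_iff_ne_zero.2 hε0.ne')
    simpa using this
  have hSne : S ≠ 0 := fun h =>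
    hPne ((comp_C_mul_X_eq_zero_iff (mem_nonZeroDivisors_of_ne_zero hε0.ne')).1 h)
  have hSd : S.natDegree = u.length := by
    rw [hS, natDegree_comp, natDegree_C_mul_X _ hε0.ne', mul_one, hPd]
  have hr : (S * R).roots = P.roots.map (fun x => ε⁻¹ * x) + R.roots := by
    rw [roots_mul (mul_ne_zero hSne hRne), hroots]
  have hinv : 0 < ε⁻¹ := inv_pos.2 hε0
  refine ⟨S * R, ?_, ?_, ?_, ?_, ?_⟩
  · rw [natDegree_mul hSne hRne, hSd, hRd, List.length_append]
  · intro i hi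
    exact hε1 i (Finset.mem_range.2 (by omega))
  · have e : (P.roots.map (fun x => ε⁻¹ * x)).countP (fun x => 0 < x)
        = P.roots.countP (fun x => 0 < x) := by
      rw [Multiset.countP_map, ← Multiset.countP_eq_card_filter]
      refine Multiset.countP_congr rfl fun x _ => ?_
      simp [mul_pos_iff_of_pos_left hinv]
    rw [hr, Multiset.countP_add, e, List.count_append]
    omega
  · have e : (P.roots.map (fun x => ε⁻¹ * x)).countP (fun x => x < 0)
        = P.roots.countP (fun x => x < 0) := by
      rw [Multiset.countP_map, ← Multiset.countP_eq_card_filter]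
      refine Multiset.countP_congr rfl fun x _ => ?_
      refine propext ?_
      rw [← neg_pos, ← mul_neg, mul_pos_iff_of_pos_left hinv, neg_pos]
    rw [hr, Multiset.countP_add, e, List.count_append]
    omega
  · rw [hr, Multiset.nodup_add]
    refine ⟨hPr.map (mul_right_injective₀ hinv.ne'), hRr, ?_⟩
    rw [Multiset.disjoint_left]
    intro y hy hy'
    obtain ⟨x, hx, rfl⟩ := Multiset.mem_map.1 hy
    refine hε2 x (Multiset.mem_toFinset.2 hx) _ (Multiset.mem_toFinset.2 hy') ?_
    rw [mul_inv_cancel_left₀ hε0.ne']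

/-! ### Explicit polynomials -/

/-- The polynomial whose coefficients, from the constant term upwards, are listed. -/
noncomputable def listPoly : List ℤ → ℝ[X]
  | [] => 0
  | a :: l => C (a : ℝ) + X * listPoly l

/-- Coefficientwise sum, the shorter list being padded with zeros. -/
def listAdd : List ℤ → List ℤ → List ℤ
  | [], m => m
  | l, [] => l
  | a :: l, b :: m => (a + b) :: listAdd l m

/-- Product of polynomials given by their coefficients, from the constant term upwards. -/
def listMul : List ℤ → List ℤ → List ℤ
  | [], _ => []
  | a :: l, m => listAdd (m.map (a * ·)) (0 :: listMul l m)

theorem listPoly_add (l m : List ℤ) : listPoly (listAdd l m) = listPoly l + listPoly m := by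
  induction l, m using listAdd.induct with
  | case1 m => simp [listAdd, listPoly]
  | case2 l h => cases l <;> simp [listAdd, listPoly]
  | case3 a l b m ih =>
    simp only [listAdd, listPoly, ih, Int.cast_add, C_add]; ring

theorem listPoly_map_mul (a : ℤ) (m : List ℤ) :
    listPoly (m.map (a * ·)) = C (a : ℝ) * listPoly m := by
  induction m with
  | nil => simp [listPoly]
  | cons b m ih =>
    simp only [List.map_cons, listPoly, ih, Int.cast_mul, C_mul]; ring

theorem listPoly_mul (l m : List ℤ) : listPoly (listMul l m) = listPoly l * listPoly m := by
  induction l with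
  | nil => simp [listMul, listPoly]
  | cons a l ih =>
    simp only [listMul, listPoly, listPoly_add, listPoly_map_mul, ih, Int.cast_zero, C_0]; ring

theorem coeff_listPoly (l : List ℤ) (i : ℕ) : (listPoly l).coeff i = (l.getD i 0 : ℤ) := by
  induction l generalizing i with
  | nil => simp [listPoly]
  | cons a l ih =>
    cases i with
    | zero => simp [listPoly]
    | succ i => rw [listPoly, coeff_add, coeff_C_succ, coeff_X_mul, ih]; simp

theorem listPoly_foldr (L : List (List ℤ)) :
    listPoly (L.foldr listMul [1]) = (L.map listPoly).prod := by
  induction L with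
  | nil => simp [listPoly]
  | cons l L ih => simp [listPoly_mul, ih]

/-- A word `word`, deficits `a`, `b` and a factored integer polynomial meant to realize them:
`(α, β) ∈ lin` stands for the factor `αx + β` and `(α, β, γ) ∈ quad` for `αx² + βx + γ`. -/
structure Block where
  word : List Bool
  a : ℕ
  b : ℕ
  lin : List (ℤ × ℤ)
  quad : List (ℤ × ℤ × ℤ)

/-- The block of `Q(-x)`, up to sign. -/
def Block.mirror (B : Block) : Block where
  word := B.word.map not
  a := B.b
  b := B.a
  lin := B.lin.map fun p => (p.1, -p.2)
  quad := B.quad.map fun q => (q.1, -q.2.1, q.2.2)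

/-- The block of `x^d Q(1/x)`, up to sign; linear factors are renormalized so that their leading
coefficient is positive. -/
def Block.revert (B : Block) : Block where
  word := B.word.reverse
  a := B.a
  b := B.b
  lin := B.lin.map fun p => if p.2 < 0 then (-p.2, -p.1) else (p.2, p.1)
  quad := B.quad.map fun q => (q.2.2, q.2.1, q.1)

/-- Coefficients of the expanded polynomial, from the constant term upwards. -/
def Block.coeffs (B : Block) : List ℤ :=
  (B.lin.map (fun p => [p.2, p.1]) ++ B.quad.map (fun q => [q.2.2, q.2.1, q.1])).foldr listMul [1]

/-- The integers `l` have the signs prescribed by the word `w`, starting with the sign `s`. -/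
def signsMatch : List Bool → ℤ → List ℤ → Bool
  | [], s, [x] => 0 < s * x
  | b :: w, s, x :: l => 0 < s * x && signsMatch w (if b then -s else s) l
  | _, _, _ => false

/-- The decidable conditions under which the polynomial of a block realizes the word. -/
def Block.Ok (B : Block) : Prop :=
  signsMatch B.word 1 B.coeffs.reverse = true ∧
  (∀ p ∈ B.lin, 0 < p.1) ∧
  (∀ q ∈ B.quad, q.2.1 * q.2.1 < 4 * q.1 * q.2.2) ∧
  B.lin.Pairwise (fun p q => p.1 * q.2 ≠ q.1 * p.2) ∧
  B.lin.countP (fun p => p.2 < 0) + 2 * B.a = B.word.count true ∧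
  B.lin.countP (fun p => 0 < p.2) + 2 * B.b = B.word.count false

instance (B : Block) : Decidable B.Ok := by unfold Block.Ok; infer_instance

theorem signsMatch_spec (w : List Bool) (s : ℤ) (l : List ℤ) (h : signsMatch w s l = true) :
    l.length = w.length + 1 ∧ ∀ i ≤ w.length, 0 < (s : ℝ) * wordSign w i * (l.getD i 0 : ℤ) := by
  induction w, s, l using signsMatch.induct with
  | case1 s x =>
    refine ⟨rfl, fun i hi => ?_⟩
    obtain rfl : i = 0 := by simpa using hi
    have : 0 < s * x := by simpa [signsMatch] using h
    simp only [wordSign, mul_one, List.getD_cons_zero]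
    exact_mod_cast this
  | case2 b w s x l ih =>
    simp only [signsMatch, Bool.and_eq_true, decide_eq_true_eq] at h
    obtain ⟨h1, h2⟩ := ih h.2
    refine ⟨by simp [h1], fun i hi => ?_⟩
    cases i with
    | zero =>
      simp only [wordSign, mul_one, List.getD_cons_zero]
      exact_mod_cast h.1
    | succ i =>
      have := h2 i (by simpa using hi)
      cases b <;> simpa [wordSign] using this
  | case3 => simp [signsMatch] at h

theorem roots_quadratic {a b c : ℝ} (h : b * b < 4 * a * c) :
    (C c + X * (C b + X * (C a + X * 0))).roots = 0 := by
  rw [Multiset.eq_zero_iff_forall_notMem]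
  intro x hx
  have hx := isRoot_of_mem_roots hx
  simp only [IsRoot, eval_add, eval_mul, eval_C, eval_X, eval_zero] at hx
  have : (2 * a * x + b) ^ 2 = b * b - 4 * a * c := by linear_combination 4 * a * hx
  nlinarith [sq_nonneg (2 * a * x + b)]

theorem roots_prod_lin (L : List (ℤ × ℤ)) (h : ∀ p ∈ L, 0 < p.1) :
    ((L.map fun p => listPoly [p.2, p.1]).prod ≠ 0) ∧
    ((L.map fun p => listPoly [p.2, p.1]).prod).roots =
      ((L.map fun p => -((p.1 : ℝ)⁻¹ * p.2) : List ℝ) : Multiset ℝ) := by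
  induction L with
  | nil => simp
  | cons p L ih =>
    obtain ⟨h1, h2⟩ := ih fun q hq => h q (by simp [hq])
    have hp : (p.1 : ℝ) ≠ 0 := by
      have := h p (by simp)
      exact_mod_cast this.ne'
    have e : listPoly [p.2, p.1] = C (p.1 : ℝ) * X + C (p.2 : ℝ) := by
      simp only [listPoly]; ring
    have hr := roots_C_mul_X_add_C (p.2 : ℝ) hp
    have hne : listPoly [p.2, p.1] ≠ 0 := by
      intro h0
      rw [← e, h0] at hr
      simp at hr
    rw [List.map_cons, List.prod_cons]
    have hm := mul_ne_zero hne h1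
    refine ⟨hm, ?_⟩
    rw [roots_mul hm, h2, e, hr]
    rfl

theorem roots_prod_quad (L : List (ℤ × ℤ × ℤ))
    (h : ∀ q ∈ L, q.2.1 * q.2.1 < 4 * q.1 * q.2.2) :
    ((L.map fun q => listPoly [q.2.2, q.2.1, q.1]).prod ≠ 0) ∧
    ((L.map fun q => listPoly [q.2.2, q.2.1, q.1]).prod).roots = 0 := by
  induction L with
  | nil => simp
  | cons q L ih =>
    obtain ⟨h1, h2⟩ := ih fun q hq => h q (by simp [hq])
    have hq : (q.2.1 : ℝ) * q.2.1 < 4 * q.1 * q.2.2 := by exact_mod_cast h q (by simp)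
    have hr : (listPoly [q.2.2, q.2.1, q.1]).roots = 0 := roots_quadratic hq
    have hne : listPoly [q.2.2, q.2.1, q.1] ≠ 0 := by
      intro h0
      have hc := coeff_listPoly [q.2.2, q.2.1, q.1] 0
      rw [h0] at hc
      have hc : (q.2.2 : ℝ) = 0 := by simpa using hc.symm
      rw [hc, mul_zero] at hq
      nlinarith [mul_self_nonneg (q.2.1 : ℝ)]
    rw [List.map_cons, List.prod_cons]
    have hm := mul_ne_zero hne h1
    exact ⟨hm, by rw [roots_mul hm, h2, hr, add_zero]⟩

theorem Block.Ok.realizable {B : Block} (h : B.Ok) : WordRealizable B.word B.a B.b := by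
  obtain ⟨hs, hl, hq, hd, ha, hb⟩ := h
  obtain ⟨hlen, hs⟩ := signsMatch_spec _ _ _ hs
  rw [List.length_reverse] at hlen
  obtain ⟨hl0, hlr⟩ := roots_prod_lin _ hl
  obtain ⟨hq0, hqr⟩ := roots_prod_quad _ hq
  have hroots : (listPoly B.coeffs).roots =
      ((B.lin.map fun p => -((p.1 : ℝ)⁻¹ * p.2) : List ℝ) : Multiset ℝ) := by
    rw [Block.coeffs, listPoly_foldr, List.map_append, List.prod_append, List.map_map,
      List.map_map]
    change ((B.lin.map fun p => listPoly [p.2, p.1]).prod *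
      (B.quad.map fun q => listPoly [q.2.2, q.2.1, q.1]).prod).roots = _
    rw [roots_mul (mul_ne_zero hl0 hq0), hlr, hqr, add_zero]
  have hsign : ∀ i ≤ B.word.length,
      0 < wordSign B.word i * (listPoly B.coeffs).coeff (B.word.length - i) := by
    intro i hi
    have := hs i hi
    rw [List.getD_eq_getElem _ _ (by simp; omega), List.getElem_reverse] at this
    rw [coeff_listPoly, List.getD_eq_getElem _ _ (by omega)]
    have e : B.coeffs.length - 1 - i = B.word.length - i := by omega
    simpa [e] using this
  refine ⟨listPoly B.coeffs, ?_, hsign, ?_, ?_, ?_⟩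
  · apply natDegree_eq_of_le_of_coeff_ne_zero
    · rw [natDegree_le_iff_coeff_eq_zero]
      intro N hN
      rw [coeff_listPoly, List.getD_eq_default _ _ (by omega), Int.cast_zero]
    · exact right_ne_zero_of_mul (hsign 0 (Nat.zero_le _)).ne'
  · rw [hroots, Multiset.coe_countP, List.countP_map, ← ha]
    congr 1
    refine List.countP_congr fun p hp => ?_
    have : (0 : ℝ) < (p.1 : ℝ)⁻¹ := inv_pos.2 (by exact_mod_cast hl p hp)
    simp only [Function.comp, decide_eq_true_eq]
    rw [← mul_neg, mul_pos_iff_of_pos_left this, neg_pos, Int.cast_lt_zero]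
  · rw [hroots, Multiset.coe_countP, List.countP_map, ← hb]
    congr 1
    refine List.countP_congr fun p hp => ?_
    have : (0 : ℝ) < (p.1 : ℝ)⁻¹ := inv_pos.2 (by exact_mod_cast hl p hp)
    simp only [Function.comp, decide_eq_true_eq]
    rw [neg_lt_zero, mul_pos_iff_of_pos_left this, Int.cast_pos]
  · rw [hroots, Multiset.coe_nodup, List.Nodup, List.pairwise_map]
    refine hd.imp_of_mem fun {p q} hp hq hne heq => hne ?_
    have h1 : (p.1 : ℝ) ≠ 0 := by exact_mod_cast (hl p hp).ne'
    have h2 : (q.1 : ℝ) ≠ 0 := by exact_mod_cast (hl q hq).ne'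
    have : (p.1 : ℝ) * q.2 = q.1 * p.2 := by
      field_simp at heq
      linarith
    exact_mod_cast this

/-- One representative per symmetry class of the polynomials used as building blocks. -/
def baseBlocks : List Block :=
  let c := true
  let p := false
  [ ⟨[p], 0, 0, [(1, 1)], []⟩,
    ⟨[p, p], 0, 1, [], [(1, 1, 1)]⟩,
    ⟨[p, c, p], 0, 1, [(1, -2)], [(1, 3, 3)]⟩,
    ⟨[p, c, c, p], 1, 1, [], [(1, -3, 4), (1, 4, 5)]⟩,
    ⟨[c, p, p, c, p], 1, 0, [(1, 4), (1, 3), (1, 2)], [(1, -10, 26)]⟩,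
    ⟨[p, c, c, c, p], 1, 1, [(1, -2)], [(1, -1, 4), (1, 4, 5)]⟩,
    ⟨[c, p, p, p, c, c, p], 0, 2, [(1, -6), (1, -7), (1, -9)], [(1, 10, 26), (1, 2, 55)]⟩,
    ⟨[p, c, c, c, p, c, c, c, p, c, c, c, p], 0, 1,
      [(1, 22818), (1, 1), (1, -3), (1, -9), (1, -10), (1, -11), (1, -12), (1, -14), (1, -15),
        (1, -30), (1, -33)], [(1, 25, 157)]⟩,
    ⟨[p, c, c, c, c, p, c, c, c, p, c, c, c, p], 0, 1,
      [(1, 5503), (1, 1), (1, -20), (1, -23), (1, -32), (1, -37), (1, -42), (1, -53), (1, -67),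
        (1, -89), (1, -334), (1, -359)], [(1, 93, 2176)]⟩ ]

/-- The building blocks: all images of `baseBlocks` under the symmetry group. -/
def blocks : List Block :=
  baseBlocks.flatMap fun B => [B, B.mirror, B.revert, B.mirror.revert]

theorem blocks_ok : ∀ B ∈ blocks, B.Ok := by decide +kernel

/-! ### Decomposing words into blocks -/

/-- A finite set of words with labels, organized by common prefixes: `node o f t` has at its root
the label `o` of the empty word, if any, and the subtrees of words starting with `false`, `true`. -/
inductive Trie
  | nil
  | node (o : Option ℕ) (f t : Trie)

def Trie.child : Trie → Bool → Trie
  | nil, _ => nil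
  | node _ f t, x => bif x then t else f

/-- Adds the given word with label `k`, overwriting a previous label. -/
def Trie.insert (k : ℕ) : List Bool → Trie → Trie
  | [], nil => node (some k) nil nil
  | [], node _ f t => node (some k) f t
  | x :: u, nil => bif x then node none nil (insert k u nil) else node none (insert k u nil) nil
  | x :: u, node o f t => bif x then node o f (insert k u t) else node o (insert k u f) t

/-- The blocks, with the deficits `(a, b)` encoded as the number `8a + b`. -/
def blockTrie : Trie := blocks.foldr (fun B t => t.insert (8 * B.a + B.b) B.word) .nil

/-- The bits of `m` encode deficits that are realizable for the word `w`. -/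
def MaskOk (w : List Bool) (m : ℕ) : Prop :=
  ∀ j, m.testBit j = true → ∃ a b, j = 8 * a + b ∧ WordRealizable w a b

/-- `ms` lists correct masks for all suffixes of `w`, from `w` itself down to the empty word. -/
def MasksOk : List Bool → List ℕ → Prop
  | [], ms => ∃ m, ms = [m] ∧ MaskOk [] m
  | x :: w, ms => ∃ m ms', ms = m :: ms' ∧ MaskOk (x :: w) m ∧ MasksOk w ms'

/-- The labels of the trie, whose root is reached by reading `u`, are realizable deficits. -/
def Trie.Sound : Trie → List Bool → Prop
  | nil, _ => True
  | node o f t, u => (∀ k, o = some k → ∃ a b, k = 8 * a + b ∧ WordRealizable u a b) ∧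
      f.Sound (u ++ [false]) ∧ t.Sound (u ++ [true])

/-- Contribution of a trie node to the mask of a word, `m` being the mask of the unread suffix. -/
def Trie.shift : Trie → ℕ → ℕ
  | node (some k) _ _, m => Nat.shiftLeft m k
  | _, _ => 0

/-- Mask of the word `w`, read along the trie, from the masks `ms` of its proper suffixes: the
union over all blocks that are prefixes of `w`. -/
def walk : List Bool → List ℕ → Trie → ℕ
  | x :: w, m :: ms, T =>
    match T.child x with
    | .nil => 0
    | .node o f t => Nat.lor ((Trie.node o f t).shift m) (walk w ms (.node o f t))
  | _, _, _ => 0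

/-- The word of `Σ_{1,4,5,4,1}`. It is a palindrome, so its orbit consists of itself and its
mirror image. -/
def exceptionalWord : List Bool :=
  [true, false, false, false, true, false, false, false, false, true, false, false, false, true]

/-- Mask of the deficits left out: `(1, 0)` for `exceptionalWord` and `(0, 1)` for its mirror. -/
def excluded (w : List Bool) : ℕ :=
  if w = exceptionalWord then 2 ^ 8
  else if w = exceptionalWord.map not then 2 ^ 1
  else 0

/-- Mask of all deficits that leave at least two positive and two negative roots, for a word with
`c` sign changes and `p` sign preservations. -/
def needed (c p : ℕ) : ℕ :=
  -- The quotient is the geometric sum of `256 ^ a` over `a < c / 2`.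
  Nat.mul (Nat.div (Nat.sub (Nat.pow 256 (Nat.div c 2)) 1) 255)
    (Nat.sub (Nat.pow 2 (Nat.div p 2)) 1)

/-- All needed deficits of `w`, if `w` has at least ten letters, are in the mask `m` or excluded. -/
def covered (w : List Bool) (m c p : ℕ) : Bool :=
  bif Nat.ble 10 (Nat.add c p) then
    bif Nat.beq (Nat.land m (needed c p)) (needed c p) then true
    else Nat.beq (Nat.land (Nat.lor m (excluded w)) (needed c p)) (needed c p)
  else true

/-- Checks `covered` on all words obtained from `w` by prepending at most `n` letters, `m` being the
mask of `w`, `ms` those of its proper suffixes and `c`, `p` its numbers of letters. The case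
distinction on the new mask makes the kernel evaluate it only once. -/
def checkTree (T : Trie) : ℕ → List Bool → ℕ → List ℕ → ℕ → ℕ → Bool
  | 0, w, m, _, c, p => covered w m c p
  | n + 1, w, m, ms, c, p =>
    covered w m c p &&
    (match walk (true :: w) (m :: ms) T with
      | 0 => false
      | k + 1 => checkTree T n (true :: w) (k + 1) (m :: ms) (c + 1) p) &&
    (match walk (false :: w) (m :: ms) T with
      | 0 => false
      | k + 1 => checkTree T n (false :: w) (k + 1) (m :: ms) c (p + 1))

/-- The finite computation behind the theorem: every word of length 10 to 14 decomposes into blocks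
in enough ways. -/
theorem checkTree_blockTrie : checkTree blockTrie 14 [] 1 [] 0 0 = true := by decide +kernel

theorem Trie.Sound.child {T : Trie} {u : List Bool} (h : T.Sound u) (x : Bool) :
    (T.child x).Sound (u ++ [x]) := by
  cases T with
  | nil => trivial
  | node o f t => cases x <;> [exact h.2.1; exact h.2.2]

theorem Trie.Sound.insert {T : Trie} {u v : List Bool} {a b : ℕ} (h : T.Sound u)
    (hv : WordRealizable (u ++ v) a b) : (T.insert (8 * a + b) v).Sound u := by
  induction v generalizing T u with
  | nil =>
    rw [List.append_nil] at hv
    have hk : ∀ k, some (8 * a + b) = some k → ∃ a b, k = 8 * a + b ∧ WordRealizable u a b :=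
      fun k hk => ⟨a, b, (Option.some.inj hk).symm, hv⟩
    cases T with
    | nil => exact ⟨hk, trivial, trivial⟩
    | node o f t => exact ⟨hk, h.2.1, h.2.2⟩
  | cons x v ih =>
    have hv' : WordRealizable ((u ++ [x]) ++ v) a b := by simpa using hv
    cases T with
    | nil =>
      have hn : ∀ k, none = some k → ∃ a b, k = 8 * a + b ∧ WordRealizable u a b :=
        fun k hk => by cases hk
      cases x
      · exact ⟨hn, ih (T := .nil) trivial hv', trivial⟩
      · exact ⟨hn, trivial, ih (T := .nil) trivial hv'⟩
    | node o f t =>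
      cases x
      · exact ⟨h.1, ih h.2.1 hv', h.2.2⟩
      · exact ⟨h.1, h.2.1, ih h.2.2 hv'⟩

theorem blockTrie_sound : blockTrie.Sound [] := by
  have key : ∀ L : List Block, (∀ B ∈ L, B.Ok) →
      (L.foldr (fun B t => t.insert (8 * B.a + B.b) B.word) Trie.nil).Sound [] := by
    intro L
    induction L with
    | nil => intro _; trivial
    | cons B L ih =>
      intro h
      exact (ih fun B' hB' => h B' (by simp [hB'])).insert (h B (by simp)).realizable
  exact key blocks blocks_ok

theorem MasksOk.head {w : List Bool} {m : ℕ} {ms : List ℕ} (h : MasksOk w (m :: ms)) :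
    MaskOk w m := by
  cases w with
  | nil => obtain ⟨m', e, h⟩ := h; cases e; exact h
  | cons x w => obtain ⟨m', ms', e, h, _⟩ := h; cases e; exact h

/-- Here the realizability of `u ++ w` comes from a block `u ++ w₁` read along the trie and a
realization of the remaining suffix `w₂`, where `w = w₁ ++ w₂`. -/
theorem walk_sound (x : Bool) (w : List Bool) (ms : List ℕ) (T : Trie) (u : List Bool)
    (hT : T.Sound u) (hms : MasksOk w ms) : MaskOk (u ++ x :: w) (walk (x :: w) ms T) := by
  induction w generalizing x ms T u with
  | nil =>
    obtain ⟨m, rfl, hm⟩ := hms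
    have hc := hT.child x
    intro j hj
    rw [walk] at hj
    cases hch : T.child x with
    | nil => simp [hch] at hj
    | node o f t =>
      rw [hch] at hj hc
      change ((Trie.node o f t).shift m ||| 0).testBit j = true at hj
      cases o with
      | none => simp [Trie.shift] at hj
      | some k =>
        obtain ⟨a, b, rfl, hr⟩ := hc.1 k rfl
        change ((m <<< (8 * a + b)) ||| 0).testBit j = true at hj
        rw [Nat.or_zero, Nat.testBit_shiftLeft, Bool.and_eq_true, decide_eq_true_eq] at hj
        obtain ⟨a', b', e, hr'⟩ := hm _ hj.2
        refine ⟨a + a', b + b', by omega, ?_⟩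
        simpa using hr.append hr'
  | cons y w ih =>
    obtain ⟨m, ms, rfl, hm, hms⟩ := hms
    have hc := hT.child x
    intro j hj
    rw [walk] at hj
    cases hch : T.child x with
    | nil => simp [hch] at hj
    | node o f t =>
      rw [hch] at hj hc
      change ((Trie.node o f t).shift m ||| walk (y :: w) ms (Trie.node o f t)).testBit j = true
        at hj
      rw [Nat.testBit_or, Bool.or_eq_true] at hj
      rcases hj with hj | hj
      · cases o with
        | none => simp [Trie.shift] at hj
        | some k =>
          obtain ⟨a, b, rfl, hr⟩ := hc.1 k rfl
          change (m <<< (8 * a + b)).testBit j = true at hj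
          rw [Nat.testBit_shiftLeft, Bool.and_eq_true, decide_eq_true_eq] at hj
          obtain ⟨a', b', e, hr'⟩ := hm _ hj.2
          refine ⟨a + a', b + b', by omega, ?_⟩
          simpa using hr.append hr'
      · obtain ⟨a, b, e, hr⟩ := ih y ms (Trie.node o f t) (u ++ [x]) hc hms j hj
        exact ⟨a, b, e, by simpa using hr⟩

theorem checkTree_sound {T : Trie} (hT : T.Sound []) (n : ℕ) (w : List Bool) (m : ℕ)
    (ms : List ℕ) (hms : MasksOk w (m :: ms))
    (h : checkTree T n w m ms (w.count true) (w.count false) = true)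
    (v : List Bool) (hv : v.length ≤ n) :
    ∃ m', MaskOk (v.reverse ++ w) m' ∧ covered (v.reverse ++ w) m'
      ((v.reverse ++ w).count true) ((v.reverse ++ w).count false) = true := by
  induction n generalizing w m ms v with
  | zero =>
    obtain rfl : v = [] := List.eq_nil_of_length_eq_zero (by omega)
    exact ⟨m, by simpa using hms.head, by simpa [checkTree] using h⟩
  | succ n ih =>
    rw [checkTree, Bool.and_eq_true, Bool.and_eq_true] at h
    obtain ⟨⟨h0, h1⟩, h2⟩ := h
    cases v with
    | nil => exact ⟨m, by simpa using hms.head, by simpa using h0⟩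
    | cons x v =>
      have hw := walk_sound x w (m :: ms) T [] hT hms
      rw [List.nil_append] at hw
      rw [List.reverse_cons, List.append_assoc]
      refine ih (x :: w) (walk (x :: w) (m :: ms) T) (m :: ms) ⟨_, _, rfl, hw, hms⟩ ?_ v
        (by simpa using hv)
      cases x
      · cases hk : walk (false :: w) (m :: ms) T with
        | zero => simp [hk] at h2
        | succ k => simpa [hk] using h2
      · cases hk : walk (true :: w) (m :: ms) T with
        | zero => simp [hk] at h1
        | succ k => simpa [hk] using h1

theorem wordRealizable_nil : WordRealizable [] 0 0 :=
  ⟨1, by simp, by simp [wordSign], by simp, by simp, by simp⟩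

theorem needed_testBit : ∀ c < 15, ∀ p < 15, ∀ a < c / 2, ∀ b < p / 2,
    (needed c p).testBit (8 * a + b) = true := by decide +kernel

theorem excluded_testBit {w : List Bool} {j : ℕ} (h : (excluded w).testBit j = true) :
    (w = exceptionalWord ∧ j = 8) ∨
    (w = exceptionalWord.map not ∧ j = 1) := by
  unfold excluded at h
  split_ifs at h with h1 h2
  · rw [Nat.testBit_two_pow, decide_eq_true_eq] at h
    exact Or.inl ⟨h1, h.symm⟩
  · rw [Nat.testBit_two_pow, decide_eq_true_eq] at h
    exact Or.inr ⟨h2, h.symm⟩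
  · simp at h

/-- The theorem in terms of words. -/
theorem word_main (w : List Bool) (h10 : 10 ≤ w.length) (h14 : w.length ≤ 14) (a b : ℕ)
    (ha : 2 * a + 2 ≤ w.count true) (hb : 2 * b + 2 ≤ w.count false) :
    WordRealizable w a b ∨
    (w = exceptionalWord ∧ a = 1 ∧ b = 0) ∨
    (w = exceptionalWord.map not ∧ a = 0 ∧ b = 1) := by
  have hmask : MaskOk [] 1 := by
    intro j hj
    have : j = 0 := by
      by_contra hne
      rw [show (1 : ℕ) = 2 ^ 0 from rfl, Nat.testBit_two_pow] at hj
      exact hne (of_decide_eq_true hj).symm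
    exact ⟨0, 0, by simpa using this, wordRealizable_nil⟩
  obtain ⟨m, hm, hcov⟩ := checkTree_sound blockTrie_sound 14 [] 1 [] ⟨1, rfl, hmask⟩
    (by simpa using checkTree_blockTrie) w.reverse (by simpa using h14)
  rw [List.reverse_reverse, List.append_nil] at hm hcov
  have hsum : w.count true + w.count false = w.length := List.count_true_add_count_false w
  set c := w.count true with hc
  set p := w.count false with hp
  have hn := needed_testBit c (by omega) p (by omega) a (by omega) b (by omega)
  have hbit : m.testBit (8 * a + b) = true ∨ (excluded w).testBit (8 * a + b) = true := by
    have h10' : Nat.ble 10 (Nat.add c p) = true :=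
      Nat.ble_eq_true_of_le (by change 10 ≤ c + p; omega)
    rw [covered, h10', cond_true] at hcov
    cases hb1 : Nat.beq (Nat.land m (needed c p)) (needed c p) with
    | true =>
      left
      have e : m &&& needed c p = needed c p := Nat.eq_of_beq_eq_true hb1
      rw [← e, Nat.testBit_and, Bool.and_eq_true] at hn
      exact hn.1
    | false =>
      rw [hb1, cond_false] at hcov
      have e : (m ||| excluded w) &&& needed c p = needed c p := Nat.eq_of_beq_eq_true hcov
      rw [← e, Nat.testBit_and, Bool.and_eq_true, Nat.testBit_or, Bool.or_eq_true] at hn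
      exact hn.1
  rcases hbit with h | h
  · obtain ⟨a', b', e, hr⟩ := hm _ h
    have hb' : 2 * b' ≤ p := by
      obtain ⟨Q, -, -, -, h, -⟩ := hr
      omega
    -- The second deficits on both sides are less than `8`, so the code determines the pair.
    obtain ⟨rfl, rfl⟩ : a = a' ∧ b = b' := by omega
    exact Or.inl hr
  · rcases excluded_testBit h with ⟨h1, h2⟩ | ⟨h1, h2⟩
    · exact Or.inr (Or.inl ⟨h1, by omega⟩)
    · exact Or.inr (Or.inr ⟨h1, by omega⟩)

/-! ### From words to sign patterns -/

/-- The sign pattern of a word, starting with the sign `s`. -/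
def wordPattern : List Bool → ℝ → List ℝ
  | [], s => [s]
  | x :: w, s => s :: wordPattern w (if x then -s else s)

/-- The word of a list of signs. -/
noncomputable def patternWord (σ : List ℝ) : List Bool :=
  (σ.zip σ.tail).map fun p => decide (p.1 * p.2 < 0)

theorem count_true_patternWord (σ : List ℝ) : (patternWord σ).count true = signChanges σ := by
  rw [patternWord, signChanges, List.count, List.countP_map]
  refine List.countP_congr fun p _ => ?_
  simp

theorem length_patternWord (σ : List ℝ) : (patternWord σ).length = σ.length - 1 := by
  simp [patternWord]

theorem wordPattern_patternWord (τ : List ℝ) (s : ℝ) (hs : s = 1 ∨ s = -1)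
    (h : ∀ t ∈ τ, t = 1 ∨ t = -1) : wordPattern (patternWord (s :: τ)) s = s :: τ := by
  induction τ generalizing s with
  | nil => rfl
  | cons t τ ih =>
    have ht := h t (by simp)
    have e : patternWord (s :: t :: τ) = decide (s * t < 0) :: patternWord (t :: τ) := rfl
    have hst : (if decide (s * t < 0) = true then -s else s) = t := by
      rcases hs with rfl | rfl <;> rcases ht with rfl | rfl <;> norm_num
    rw [e, wordPattern, hst, ih t ht fun r hr => h r (by simp [hr])]

theorem length_wordPattern (w : List Bool) (s : ℝ) :
    (wordPattern w s).length = w.length + 1 := by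
  induction w generalizing s with
  | nil => rfl
  | cons x w ih => simp [wordPattern, ih]

theorem getElem_wordPattern (w : List Bool) (s : ℝ) (i : ℕ) (hi : i < (wordPattern w s).length) :
    (wordPattern w s)[i] = s * wordSign w i := by
  induction w generalizing s i with
  | nil =>
    obtain rfl : i = 0 := by simpa [wordPattern] using hi
    simp [wordPattern, wordSign]
  | cons x w ih =>
    cases i with
    | zero => simp [wordPattern, wordSign]
    | succ i =>
      simp only [wordPattern, List.getElem_cons_succ, wordSign]
      rw [ih]
      cases x <;> simp

theorem WordRealizable.realizable {w : List Bool} {a b pos neg : ℕ} (h : WordRealizable w a b)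
    (hpos : pos + 2 * a = w.count true) (hneg : neg + 2 * b = w.count false) :
    Realizable (wordPattern w 1) pos neg := by
  obtain ⟨Q, hd, hs, hp, hn, hr⟩ := h
  refine ⟨Q, ⟨by rw [hd, length_wordPattern], fun i => ?_⟩, by omega, by omega, hr⟩
  have hi : (i : ℕ) ≤ w.length := by
    have := i.2.trans_eq (length_wordPattern w 1)
    omega
  rw [List.get_eq_getElem, getElem_wordPattern, one_mul, hd]
  exact hs i hi

theorem stmt1 (d : ℕ) (hd₁ : 10 ≤ d) (hd₂ : d ≤ 14) (σ : List ℝ) (pos neg : ℕ)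
    (hσ : IsSignPatternList σ) (hlen : σ.length = d + 1)
    (hadm : Admissible σ pos neg) (hpos : 2 ≤ pos) (hneg : 2 ≤ neg)
    (hexc : ¬ SameOrbit (sigmaPat [1, 4, 5, 4, 1], 2, 10) (σ, pos, neg)) :
    Realizable σ pos neg := by
  obtain ⟨hc, hp, hce, hpe⟩ := hadm
  have hct := count_true_patternWord σ
  have hwl := length_patternWord σ
  have hsum := List.count_true_add_count_false (patternWord σ)
  have hw : wordPattern (patternWord σ) 1 = σ := by
    obtain ⟨hh, hall⟩ := hσ
    cases σ with
    | nil => simp at hh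
    | cons s τ =>
      obtain rfl : s = 1 := by simpa using hh
      exact wordPattern_patternWord τ 1 (Or.inl rfl) fun t ht => hall t (by simp [ht])
  obtain ⟨a, ha⟩ := hce
  obtain ⟨b, hb⟩ := hpe
  rw [← hct] at hc hp ha hb
  rw [← hwl] at hp hb
  rcases word_main (patternWord σ) (by omega) (by omega) a b (by omega) (by omega) with
    h | ⟨h, rfl, rfl⟩ | ⟨h, rfl, rfl⟩
  · rw [← hw]
    exact h.realizable (by omega) (by omega)
  · have h4 : (patternWord σ).count true = 4 := by rw [h]; decide
    have h14 : (patternWord σ).length = 14 := by rw [h]; decide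
    obtain ⟨rfl, rfl⟩ : pos = 2 ∧ neg = 10 := by omega
    refine absurd (Or.inl ?_) hexc
    rw [← hw, h]
    simp [wordPattern, exceptionalWord, sigmaPat, altBlocks, List.replicate]
  · have h10 : (patternWord σ).count true = 10 := by rw [h]; decide
    have h14 : (patternWord σ).length = 14 := by rw [h]; decide
    obtain ⟨rfl, rfl⟩ : pos = 10 ∧ neg = 2 := by omega
    refine absurd (Or.inr (Or.inl ?_)) hexc
    rw [← hw, h]
    simp [wordPattern, exceptionalWord, sigmaPat, altBlocks, List.replicate, imC, imPat,
      List.mapIdx_cons]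
    norm_num
end

section
/- For d = 10: the couple (Σ_{1,4,5,1}, (1,7)) is not realizable, and every compatible couple (σ, (pos, neg)) of degree 10 with min(pos, neg) = 1 whose Z_2×Z_2-orbit is neither that of (Σ_{1,4,5,1}, (1,7)) nor that of (Σ_{1,4,4,2}, (1,7)) is realizable. -/
open Polynomial

/-!
**Nonrealizability of `(Σ_{1,4,5,1}, (1, 7))`.** A realizing polynomial factors as `Q = S * f`,
where `f = (X - ρ) * R` collects the real roots (`ρ > 0`, and `R` monic with seven negative roots)
and `S = a x² + b x + c` has no real root, so `b² < 4ac`. All coefficients of `R` are positive, and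
Newton's inequalities for `R` show that the coefficients of `f`, read from the top, change sign
once and for all (`coeff_step`). If `f₄ ≥ 0`, then `f₅, …, f₈ > 0`, the conditions `Q₉ < 0` and
`Q₆ < 0` give `a f₇ < -b f₈` and `c f₆ < -b f₅`, whence `a c f₇ f₆ < b² f₈ f₅ < 4 a c f₈ f₅`.
But the fifth derivative of `f` is a cubic with three real, necessarily negative, roots, and the
arithmetic-harmonic inequality for these roots reads `f₇ f₆ ≥ 4 f₈ f₅` (`four_mul_le`). If `f₄ < 0`,
the same argument applies to the reversed polynomial, with `Q₁ > 0` and `Q₄ > 0`.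

**Realizability.** A sign pattern of degree `d` is encoded by a word of `d` letters, `true` for a
sign change and `false` for a sign preservation. If `A` realizes `(u, (p, n))` and `B` realizes
`(v, (p', n'))`, then for small `ε > 0` the product of `A` and of `B` with its roots multiplied by
`ε` realizes `(u ++ v, (p + p', n + n'))` (`RealW.append`). Fifteen explicit polynomials of degree
at most seven (`basics`) are enough: a finite search shows that concatenations of their words yield
every couple of degree ten with `pos = 1`, apart from four words with `neg = 7`, which make up the
`pos = 1` half of the two excluded orbits. The case `neg = 1` follows by the substitution
`x ↦ -x`, which negates every letter of the word.
-/

/-! ### Inequalities for coefficients of real-rooted polynomials -/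

/-- By Rolle's theorem, the derivative of a real-rooted polynomial is real-rooted. -/
theorem splits_derivative {p : ℝ[X]} (hp : p.Splits) : (derivative p).Splits := by
  rw [splits_iff_card_roots] at hp ⊢
  have h1 := card_roots_le_derivative p
  have h2 := card_roots' (derivative p)
  rw [natDegree_derivative] at h2 ⊢
  omega

theorem splits_iterate_derivative {p : ℝ[X]} (hp : p.Splits) (k : ℕ) :
    (derivative^[k] p).Splits := by
  induction k with
  | zero => simpa using hp
  | succ k ih =>
    rw [Function.iterate_succ_apply']
    exact splits_derivative ih

theorem splits_reverse {p : ℝ[X]} (hp : p.Splits) : p.reverse.Splits := by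
  obtain ⟨m, hm⟩ := splits_iff_exists_multiset.1 hp
  rw [hm, reverse_mul_of_domain]
  refine Splits.mul (by simp) ?_
  clear hm
  induction m using Multiset.induction with
  | empty => exact Splits.of_natDegree_le_one ((reverse_natDegree_le _).trans (by simp))
  | cons a s ih =>
    rw [Multiset.map_cons, Multiset.prod_cons, reverse_mul_of_domain]
    refine Splits.mul (Splits.of_natDegree_le_one ?_) ih
    exact (reverse_natDegree_le _).trans (natDegree_X_sub_C_le a)

/-- Laguerre's inequality `p p'' ≤ p'²`, by induction on the linear factors. -/
theorem laguerre_of_splits {p : ℝ[X]} (hp : p.Splits) (x : ℝ) :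
    p.eval x * (derivative (derivative p)).eval x ≤ (derivative p).eval x ^ 2 := by
  obtain ⟨m, hm⟩ := splits_iff_exists_multiset.1 hp
  rw [hm]
  generalize p.leadingCoeff = c
  suffices h : ∀ q : ℝ[X], q = (m.map fun a => X - C a).prod →
      q.eval x * (derivative (derivative q)).eval x ≤ (derivative q).eval x ^ 2 by
    have := mul_le_mul_of_nonneg_left (h _ rfl) (sq_nonneg c)
    simp only [derivative_C_mul, eval_mul, eval_C]
    nlinarith [this]
  clear hm
  induction m using Multiset.induction with
  | empty => rintro q rfl; simp
  | cons a s ih =>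
    rintro q rfl
    have := mul_le_mul_of_nonneg_left (ih _ rfl) (sq_nonneg (x - a))
    rw [Multiset.map_cons, Multiset.prod_cons]
    generalize (s.map fun a => X - C a).prod = r at *
    simp only [derivative_mul, derivative_add, derivative_sub, derivative_X, derivative_C, eval_add,
      eval_mul, eval_sub, eval_X, eval_C, sub_zero, one_mul]
    nlinarith [sq_nonneg (r.eval x)]

/-- A form of Newton's inequalities: Laguerre's inequality at `0` for the `k`-th derivative. -/
theorem newton_of_splits {p : ℝ[X]} (hp : p.Splits) (k : ℕ) :
    (k + 2) * (p.coeff k * p.coeff (k + 2)) ≤ (k + 1) * p.coeff (k + 1) ^ 2 := by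
  have h := laguerre_of_splits (splits_iterate_derivative hp k) 0
  rw [← Function.iterate_succ_apply' derivative, ← Function.iterate_succ_apply' derivative] at h
  simp only [← coeff_zero_eq_eval_zero, coeff_iterate_derivative, zero_add,
    Nat.descFactorial_self, nsmul_eq_mul] at h
  simp only [Nat.succ_eq_add_one, Nat.factorial_succ, add_assoc, Nat.reduceAdd] at h
  push_cast at h
  have hk : (0 : ℝ) < (k.factorial : ℝ) ^ 2 * (k + 1) := by positivity
  refine le_of_mul_le_mul_left ?_ hk
  nlinarith [h]

/-- If the elementary symmetric functions of three reals are positive, so are the three reals, and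
`e₁ e₂ ≥ 9 e₃`. -/
theorem cubic_aux {s1 s2 s3 A B D : ℝ} (h1 : 0 < s1) (h2 : 0 < s2) (h3 : 0 < s3)
    (e1 : s1 = A + B + D) (e2 : s2 = A * B + A * D + B * D) (e3 : s3 = A * B * D) :
    9 * s3 ≤ s1 * s2 := by
  have key : ∀ t : ℝ, t ^ 3 - s1 * t ^ 2 + s2 * t - s3 = 0 → 0 < t := by
    intro t ht
    by_contra hneg
    push Not at hneg
    have a1 : t ^ 3 ≤ 0 := by nlinarith [sq_nonneg t]
    have a2 : 0 ≤ s1 * t ^ 2 := by positivity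
    have a3 : s2 * t ≤ 0 := by nlinarith
    linarith
  have hA := key A (by rw [e1, e2, e3]; ring)
  have hB := key B (by rw [e1, e2, e3]; ring)
  have hD := key D (by rw [e1, e2, e3]; ring)
  rw [e1, e2, e3]
  nlinarith [mul_nonneg hA.le (sq_nonneg (B - D)), mul_nonneg hB.le (sq_nonneg (A - D)),
    mul_nonneg hD.le (sq_nonneg (A - B))]

/-- The inequality `e₁ e₂ ≥ 9 e₃` for the opposites of the roots of the fifth derivative of `f`, a cubic. -/
theorem four_mul_le {f : ℝ[X]} (hf : f.Splits) (hd : f.natDegree = 8)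
    (h8 : 0 < f.coeff 8) (h7 : 0 < f.coeff 7) (h6 : 0 < f.coeff 6) (h5 : 0 < f.coeff 5) :
    4 * (f.coeff 8 * f.coeff 5) ≤ f.coeff 7 * f.coeff 6 := by
  have hs := splits_iterate_derivative hf 5
  have c0 : (derivative^[5] f).coeff 0 = 120 * f.coeff 5 := by
    rw [coeff_iterate_derivative]; norm_num [Nat.descFactorial]
  have c1 : (derivative^[5] f).coeff 1 = 720 * f.coeff 6 := by
    rw [coeff_iterate_derivative]; norm_num [Nat.descFactorial]
  have c2 : (derivative^[5] f).coeff 2 = 2520 * f.coeff 7 := by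
    rw [coeff_iterate_derivative]; norm_num [Nat.descFactorial]
  have c3 : (derivative^[5] f).coeff 3 = 6720 * f.coeff 8 := by
    rw [coeff_iterate_derivative]; norm_num [Nat.descFactorial]
  have hdeg : (derivative^[5] f).natDegree = 3 := by
    refine le_antisymm ?_ (le_natDegree_of_ne_zero (by rw [c3]; positivity))
    have := natDegree_iterate_derivative f 5
    omega
  have hl : (derivative^[5] f).leadingCoeff = 6720 * f.coeff 8 := by
    rw [leadingCoeff, hdeg, c3]
  have hcard := splits_iff_card_roots.1 hs
  rw [hdeg, Multiset.card_eq_three] at hcard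
  obtain ⟨a, b, c, habc⟩ := hcard
  have he := hs.eq_prod_roots
  rw [hl, habc] at he
  have he' : derivative^[5] f = C (6720 * f.coeff 8) * X ^ 3
      + C (6720 * f.coeff 8 * (-a + -b + -c)) * X ^ 2
      + C (6720 * f.coeff 8 * (a * b + a * c + b * c)) * X
      + C (6720 * f.coeff 8 * (-(a * b * c))) := by
    rw [he]
    simp only [Multiset.insert_eq_cons, Multiset.map_cons, Multiset.map_singleton,
      Multiset.prod_cons, Multiset.prod_singleton, C_mul, C_add, C_neg]
    ring
  have hco : ∀ p q r s : ℝ, (C p * X ^ 3 + C q * X ^ 2 + C r * X + C s).coeff 0 = s ∧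
      (C p * X ^ 3 + C q * X ^ 2 + C r * X + C s).coeff 1 = r ∧
      (C p * X ^ 3 + C q * X ^ 2 + C r * X + C s).coeff 2 = q := by
    intro p q r s
    simp [coeff_X, coeff_C, coeff_X_pow]
  rw [he', (hco _ _ _ _).1] at c0
  rw [he', (hco _ _ _ _).2.1] at c1
  rw [he', (hco _ _ _ _).2.2] at c2
  have := @cubic_aux (2520 * f.coeff 7 / (6720 * f.coeff 8)) (720 * f.coeff 6 / (6720 * f.coeff 8))
    (120 * f.coeff 5 / (6720 * f.coeff 8)) (-a) (-b) (-c) (by positivity) (by positivity)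
    (by positivity) (by rw [← c2]; field_simp) (by rw [← c1]; field_simp; try ring)
    (by rw [← c0]; field_simp; try ring)
  field_simp at this
  nlinarith [this]

/-- `four_mul_le` for the polynomial `-x⁸ f(1/x)`. -/
theorem four_mul_le' {f : ℝ[X]} (hf : f.Splits) (hd : f.natDegree = 8)
    (h0 : f.coeff 0 < 0) (h1 : f.coeff 1 < 0) (h2 : f.coeff 2 < 0) (h3 : f.coeff 3 < 0) :
    4 * (f.coeff 0 * f.coeff 3) ≤ f.coeff 1 * f.coeff 2 := by
  have hr : ∀ i ≤ 8, (-f.reverse).coeff i = - f.coeff (8 - i) := by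
    intro i hi
    rw [coeff_neg, coeff_reverse, hd, revAt_le hi]
  have hdr : (-f.reverse).natDegree = 8 := by
    rw [natDegree_neg, reverse_natDegree, hd, natTrailingDegree_eq_zero.2 (Or.inr h0.ne)]
  have := four_mul_le (splits_reverse hf).neg hdr (by rw [hr 8 le_rfl]; simpa using h0)
    (by rw [hr 7 (by norm_num)]; simpa using h1) (by rw [hr 6 (by norm_num)]; simpa using h2)
    (by rw [hr 5 (by norm_num)]; simpa using h3)
  simp only [hr 8 le_rfl, hr 7 (by norm_num), hr 6 (by norm_num), hr 5 (by norm_num)] at this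
  simpa using this

/-! ### Nonrealizability of `(Σ_{1,4,5,1}, (1, 7))` -/

theorem coeff_pos_of_neg_roots (s : Multiset ℝ) (hs : ∀ a ∈ s, a < 0) :
    (∀ k, 0 ≤ ((s.map fun a => X - C a).prod).coeff k) ∧
      ∀ k ≤ s.card, 0 < ((s.map fun a => X - C a).prod).coeff k := by
  induction s using Multiset.induction with
  | empty =>
    refine ⟨fun k => ?_, fun k hk => ?_⟩
    · simp only [Multiset.map_zero, Multiset.prod_zero, coeff_one]
      split_ifs <;> norm_num
    · have : k = 0 := by simpa using hk
      simp [this]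
  | cons a s ih =>
    obtain ⟨h0, h1⟩ := ih fun b hb => hs b (Multiset.mem_cons_of_mem hb)
    have ha : a < 0 := hs a (Multiset.mem_cons_self a s)
    rw [Multiset.map_cons, Multiset.prod_cons, Multiset.card_cons]
    generalize (s.map fun a => X - C a).prod = p at *
    have e0 : ((X - C a) * p).coeff 0 = -a * p.coeff 0 := by simp [sub_mul]
    have e1 : ∀ k, ((X - C a) * p).coeff (k + 1) = p.coeff k + -a * p.coeff (k + 1) := by
      intro k; simp [sub_mul, coeff_X_mul]; ring
    refine ⟨fun k => ?_, fun k hk => ?_⟩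
    · cases k with
      | zero => rw [e0]; exact mul_nonneg (by linarith) (h0 0)
      | succ k => rw [e1]; exact add_nonneg (h0 k) (mul_nonneg (by linarith) (h0 _))
    · cases k with
      | zero => rw [e0]; exact mul_pos (by linarith) (h1 0 (by omega))
      | succ k =>
        rw [e1]
        exact add_pos_of_pos_of_nonneg (h1 k (by omega)) (mul_nonneg (by linarith) (h0 _))

/-- If `R` is real-rooted with positive coefficients, then below a nonpositive coefficient of
`(X - ρ) R` the next one is negative: otherwise `R_{i+1}² ≤ R_i R_{i+2}`, against Newton. -/
theorem coeff_step {R : ℝ[X]} (hR : R.Splits) {ρ : ℝ} {i : ℕ}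
    (h0 : 0 < R.coeff i) (h1 : 0 < R.coeff (i + 1)) (h2 : 0 < R.coeff (i + 2))
    (h : ((X - C ρ) * R).coeff (i + 2) ≤ 0) : ((X - C ρ) * R).coeff (i + 1) < 0 := by
  have e : ∀ k, ((X - C ρ) * R).coeff (k + 1) = R.coeff k - ρ * R.coeff (k + 1) := by
    intro k; simp [sub_mul, coeff_X_mul]
  rw [e] at h ⊢
  have hN := newton_of_splits hR i
  by_contra hc
  push Not at hc
  have h3 : R.coeff (i + 1) ^ 2 ≤ R.coeff i * R.coeff (i + 2) := by
    have a1 : R.coeff (i + 1) * R.coeff (i + 1) ≤ R.coeff (i + 1) * (ρ * R.coeff (i + 2)) :=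
      mul_le_mul_of_nonneg_left (by linarith) h1.le
    have a2 : ρ * R.coeff (i + 1) * R.coeff (i + 2) ≤ R.coeff i * R.coeff (i + 2) :=
      mul_le_mul_of_nonneg_right (by linarith) h2.le
    nlinarith
  have h4 : 0 < R.coeff i * R.coeff (i + 2) := mul_pos h0 h2
  have h5 : ((i : ℝ) + 1) * R.coeff (i + 1) ^ 2 ≤ (i + 1) * (R.coeff i * R.coeff (i + 2)) :=
    mul_le_mul_of_nonneg_left h3 (by positivity)
  nlinarith

theorem coeff_quad_mul {S f : ℝ[X]} (hS : S.natDegree = 2) :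
    (S * f).coeff 1 = S.coeff 1 * f.coeff 0 + S.coeff 0 * f.coeff 1 ∧ ∀ m, (S * f).coeff (m + 2) =
      S.coeff 2 * f.coeff m + S.coeff 1 * f.coeff (m + 1) + S.coeff 0 * f.coeff (m + 2) := by
  have hS' : S = C (S.coeff 2) * X ^ 2 + C (S.coeff 1) * X + C (S.coeff 0) :=
    eq_quadratic_of_degree_le_two (natDegree_le_iff_degree_le.1 hS.le)
  generalize S.coeff 2 = a, S.coeff 1 = b, S.coeff 0 = c at *
  subst hS'
  constructor
  · have : (C a * X ^ 2 + C b * X + C c) * f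
      = X * (X * (C a * f)) + X * (C b * f) + C c * f := by ring
    rw [this, coeff_add, coeff_add, coeff_X_mul, coeff_X_mul, coeff_C_mul, coeff_C_mul,
      mul_coeff_zero]
    simp
  · intro m
    have : (C a * X ^ 2 + C b * X + C c) * f
      = X * (X * (C a * f)) + X * (C b * f) + C c * f := by ring
    rw [this, coeff_add, coeff_add, coeff_X_mul, coeff_X_mul, coeff_X_mul, coeff_C_mul,
      coeff_C_mul, coeff_C_mul]

theorem disc_neg_of_roots_eq_zero_s2 {S : ℝ[X]} (hS : S.natDegree = 2) (h2 : 0 < S.coeff 2)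
    (hr : S.roots = 0) : S.coeff 1 ^ 2 < 4 * (S.coeff 2 * S.coeff 0) := by
  by_contra hc
  push Not at hc
  have hd : 0 ≤ discrim (S.coeff 2) (S.coeff 1) (S.coeff 0) := by
    rw [discrim]; linarith
  obtain ⟨x, hx⟩ := exists_quadratic_eq_zero (a := S.coeff 2) (b := S.coeff 1) (c := S.coeff 0)
    h2.ne' ⟨_, (Real.mul_self_sqrt hd).symm⟩
  have hS0 : S ≠ 0 := by rintro rfl; simp at hS
  have hmem : x ∈ S.roots := by
    rw [mem_roots hS0, IsRoot,
      eq_quadratic_of_degree_le_two (natDegree_le_iff_degree_le.1 hS.le)]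
    simp only [eval_add, eval_mul, eval_C, eval_pow, eval_X]
    linarith [hx, sq x]
  simp [hr] at hmem

/-- The core of the nonrealizability: the signs of four coefficients of `S (X - ρ) R` are incompatible
with negative discriminant of `S`. -/
theorem not_factored {R S : ℝ[X]} {ρ : ℝ} (hρ : 0 < ρ) (hR : R.Splits) (hm : R.Monic)
    (hd : R.natDegree = 7) (hpos : ∀ k ≤ 7, 0 < R.coeff k) (hS : S.natDegree = 2)
    (h2 : 0 < S.coeff 2) (hr : S.roots = 0)
    (q9 : (S * ((X - C ρ) * R)).coeff 9 < 0) (q6 : (S * ((X - C ρ) * R)).coeff 6 < 0)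
    (q4 : 0 < (S * ((X - C ρ) * R)).coeff 4) (q1 : 0 < (S * ((X - C ρ) * R)).coeff 1) : False := by
  have hdisc := disc_neg_of_roots_eq_zero_s2 hS h2 hr
  have step : ∀ i ≤ 5, ((X - C ρ) * R).coeff (i + 2) ≤ 0 → ((X - C ρ) * R).coeff (i + 1) < 0 :=
    fun i hi => coeff_step hR (hpos _ (by omega)) (hpos _ (by omega)) (hpos _ (by omega))
  have f0 : ((X - C ρ) * R).coeff 0 < 0 := by
    rw [mul_coeff_zero]; simpa using mul_pos hρ (hpos 0 (by omega))
  have hfs : ((X - C ρ) * R).Splits := (Splits.X_sub_C ρ).mul hR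
  have hfm : ((X - C ρ) * R).Monic := (monic_X_sub_C ρ).mul hm
  have hfd : ((X - C ρ) * R).natDegree = 8 := by
    rw [(monic_X_sub_C ρ).natDegree_mul hm, natDegree_X_sub_C, hd]
  have f8 : ((X - C ρ) * R).coeff 8 = 1 := by rw [← hfd]; exact hfm
  have f9 : ((X - C ρ) * R).coeff 9 = 0 := coeff_eq_zero_of_natDegree_lt (by omega)
  obtain ⟨c1, cm⟩ := coeff_quad_mul (f := (X - C ρ) * R) hS
  rw [c1] at q1
  rw [cm 7] at q9
  rw [cm 4] at q6
  rw [cm 2] at q4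
  norm_num at q9 q6 q4
  generalize (X - C ρ) * R = f at *
  rw [f8, f9] at q9
  generalize S.coeff 2 = a, S.coeff 1 = b, S.coeff 0 = c at *
  have hc : 0 < c := by nlinarith [sq_nonneg b]
  -- with `f₄ < 0` the contradiction comes from `Q₁, Q₄ > 0`, otherwise from `Q₆, Q₉ < 0`
  rcases lt_or_ge (f.coeff 4) 0 with h4 | h4
  · have f3 := step 2 (by omega) h4.le
    have f2 := step 1 (by omega) f3.le
    have f1 := step 0 (by omega) f2.le
    norm_num at f3 f2 f1
    have hT := four_mul_le' hfs hfd f0 f1 f2 f3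
    have k1 : c * -f.coeff 1 < -b * -f.coeff 0 := by linarith
    have k2 : a * -f.coeff 2 < -b * -f.coeff 3 := by
      nlinarith [mul_pos hc (neg_pos.2 h4)]
    have k3 := mul_lt_mul'' k1 k2 (by nlinarith) (by nlinarith)
    have k4 := mul_lt_mul_of_pos_right hdisc (mul_pos_of_neg_of_neg f0 f3)
    have k5 := mul_le_mul_of_nonneg_left hT (mul_pos h2 hc).le
    nlinarith
  · have f5 : 0 < f.coeff 5 := by
      by_contra h; exact absurd (step 3 (by omega) (not_lt.1 h)) (not_lt.2 h4)
    have f6 : 0 < f.coeff 6 := by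
      by_contra h; exact absurd (step 4 (by omega) (not_lt.1 h)) (not_lt.2 f5.le)
    have f7 : 0 < f.coeff 7 := by
      by_contra h; exact absurd (step 5 (by omega) (not_lt.1 h)) (not_lt.2 f6.le)
    have hT := four_mul_le hfs hfd (by rw [f8]; norm_num) f7 f6 f5
    rw [f8, one_mul] at hT
    have k1 : a * f.coeff 7 < -b := by linarith
    have k2 : c * f.coeff 6 < -b * f.coeff 5 := by
      nlinarith [mul_nonneg h2.le h4]
    have k3 := mul_lt_mul'' k1 k2 (by positivity) (by positivity)
    have k4 := mul_lt_mul_of_pos_right hdisc f5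
    have k5 := mul_le_mul_of_nonneg_left hT (mul_pos h2 hc).le
    nlinarith

theorem not_realizable_1451 : ¬ Realizable (sigmaPat [1, 4, 5, 1]) 1 7 := by
  rintro ⟨Q, ⟨hlen, hsgn⟩, hp, hn, -⟩
  have hdeg : Q.natDegree = 10 := by
    simpa [sigmaPat, altBlocks] using hlen
  rw [hdeg] at hsgn
  have hL : sigmaPat [1, 4, 5, 1] = [1, -1, -1, -1, -1, 1, 1, 1, 1, 1, -1] := by
    simp [sigmaPat, altBlocks, List.replicate]
  rw [hL] at hsgn
  have s0 := hsgn ⟨0, by simp⟩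
  have s1 := hsgn ⟨1, by simp⟩
  have s4 := hsgn ⟨4, by simp⟩
  have s6 := hsgn ⟨6, by simp⟩
  have s9 := hsgn ⟨9, by simp⟩
  have s10 := hsgn ⟨10, by simp⟩
  simp at s0 s1 s4 s6 s9 s10
  have hQ0 : Q ≠ 0 := by rintro rfl; simp at hdeg
  rw [Multiset.countP_eq_card_filter] at hp hn
  obtain ⟨ρ, hρ⟩ := Multiset.card_eq_one.1 hp
  have hsplit : Q.roots = {ρ} + Q.roots.filter (fun x => x < 0) := by
    conv_lhs => rw [← Multiset.filter_add_not (fun x => 0 < x) Q.roots]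
    rw [hρ]
    congr 1
    refine Multiset.filter_congr fun x hx => ?_
    have hx0 : x ≠ 0 := by
      rintro rfl
      rw [mem_roots hQ0, IsRoot, ← coeff_zero_eq_eval_zero] at hx
      linarith
    exact ⟨fun h => lt_of_le_of_ne (not_lt.1 h) hx0, fun h => not_lt.2 h.le⟩
  have hρ0 : 0 < ρ := by
    have : ρ ∈ Q.roots.filter (fun x => 0 < x) := by rw [hρ]; simp
    exact (Multiset.mem_filter.1 this).2
  -- `S` is the cofactor of the real roots of `Q`
  obtain ⟨S, hS, hcard, hSr⟩ := exists_prod_multiset_X_sub_C_mul Q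
  set N := Q.roots.filter (fun x => x < 0) with hN
  have hNneg : ∀ a ∈ N, a < 0 := fun a ha => (Multiset.mem_filter.1 ha).2
  have hSd : S.natDegree = 2 := by
    rw [hsplit, Multiset.card_add, hn, hdeg] at hcard
    simp at hcard
    omega
  rw [hsplit, Multiset.map_add, Multiset.prod_add, Multiset.map_singleton,
    Multiset.prod_singleton, mul_comm] at hS
  have hm := monic_multisetProd_X_sub_C N
  have hS2 : 0 < S.coeff 2 := by
    have : Q.leadingCoeff = S.leadingCoeff := by
      rw [← hS, leadingCoeff_mul, ((monic_X_sub_C ρ).mul hm).leadingCoeff, mul_one]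
    rw [leadingCoeff, leadingCoeff, hdeg, hSd] at this
    rwa [← this]
  refine not_factored (R := (N.map fun a => X - C a).prod) (S := S) hρ0
    (Splits.multisetProd fun f hf => ?_) hm ?_ ?_ hSd hS2 hSr ?_ ?_ ?_ ?_
  · obtain ⟨a, -, rfl⟩ := Multiset.mem_map.1 hf
    exact Splits.X_sub_C a
  · rw [natDegree_multiset_prod_X_sub_C_eq_card, hn]
  · intro k hk
    exact (coeff_pos_of_neg_roots N hNneg).2 k (by rw [hn]; exact hk)
  all_goals rw [hS]; assumption

/-! ### Words and their concatenation -/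

/-- The `i`-th sign, counted from `0`, of the sign pattern which starts with `+` and whose sign changes
(`true`) and preservations (`false`) are spelled by the word. -/
def sgn : List Bool → ℕ → ℤ
  | [], _ => 1
  | _ :: _, 0 => 1
  | b :: w, i + 1 => (if b then -1 else 1) * sgn w i

theorem sgn_zero (w : List Bool) : sgn w 0 = 1 := by cases w <;> rfl

theorem sgn_append_left (u v : List Bool) {i : ℕ} (hi : i ≤ u.length) :
    sgn (u ++ v) i = sgn u i := by
  induction u generalizing i with
  | nil =>
    obtain rfl : i = 0 := by simpa using hi
    simp [sgn_zero]
  | cons b u ih =>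
    cases i with
    | zero => simp [sgn_zero]
    | succ i => simp only [List.cons_append, sgn, ih (i := i) (by simpa using hi)]

theorem sgn_append_right (u v : List Bool) (j : ℕ) :
    sgn (u ++ v) (u.length + j) = sgn u u.length * sgn v j := by
  induction u with
  | nil => simp [sgn]
  | cons b u ih =>
    have : (b :: u).length + j = (u.length + j) + 1 := by simp; omega
    rw [this]
    simp only [List.cons_append, List.length_cons, sgn, ih, mul_assoc]

theorem sgn_map_not (w : List Bool) {i : ℕ} (hi : i ≤ w.length) :
    sgn (w.map not) i = (-1) ^ i * sgn w i := by
  induction w generalizing i with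
  | nil =>
    obtain rfl : i = 0 := by simpa using hi
    simp [sgn]
  | cons b w ih =>
    cases i with
    | zero => simp [sgn]
    | succ i =>
      simp only [List.map_cons, sgn, ih (i := i) (by simpa using hi), pow_succ]
      cases b <;> simp

/-- `Realizable`, for the sign pattern encoded by the word `w`. -/
def RealW (w : List Bool) (p n : ℕ) : Prop :=
  ∃ Q : ℝ[X], Q.natDegree = w.length ∧
    (∀ i ≤ w.length, 0 < (sgn w i : ℝ) * Q.coeff (w.length - i)) ∧ RootData Q p n

/-- The substitution `x ↦ -x`, up to sign, negates all letters and swaps positive and negative roots. -/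
theorem RealW.map_not {w : List Bool} {p n : ℕ} (h : RealW w p n) : RealW (w.map not) n p := by
  obtain ⟨Q, hd, hs, hp, hn, hnd⟩ := h
  have hr : (Q.scaleRoots (-1)).roots = Q.roots.map (fun x => -x) := by
    rw [roots_scaleRoots _ isUnit_one.neg]
    simp
  refine ⟨Q.scaleRoots (-1), by simp [hd], fun i hi => ?_, ?_, ?_, ?_⟩
  · rw [List.length_map] at hi ⊢
    rw [coeff_scaleRoots, hd, Nat.sub_sub_self hi, sgn_map_not w hi]
    have := hs i hi
    have h1 : ((-1 : ℝ) ^ i) * (-1) ^ i = 1 := by rw [← mul_pow]; simp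
    push_cast
    calc _ < _ := this
      _ = ((-1 : ℝ) ^ i * (-1) ^ i) * (sgn w i * Q.coeff (w.length - i)) := by rw [h1, one_mul]
      _ = _ := by ring
  · rw [hr, Multiset.countP_map, ← hn, Multiset.countP_eq_card_filter]
    simp
  · rw [hr, Multiset.countP_map, ← hp, Multiset.countP_eq_card_filter]
    simp
  · rw [hr]
    exact hnd.map neg_injective

theorem coeff_mul_scaleRoots (A B : ℝ[X]) (ε : ℝ) (m : ℕ) :
    (A * B.scaleRoots ε).coeff m = ∑ x ∈ Finset.HasAntidiagonal.antidiagonal m,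
      A.coeff x.1 * (B.coeff x.2 * ε ^ (B.natDegree - x.2)) := by
  simp [coeff_mul]

open Filter Topology in
/-- For small `ε`, the top coefficients of `A * B.scaleRoots ε` have the signs of those of `A`. -/
theorem eventually_coeff_high (A B : ℝ[X]) (i : ℕ) (s : ℝ)
    (h : 0 < s * (A.coeff i * B.leadingCoeff)) :
    ∀ᶠ ε in 𝓝[>] (0 : ℝ), 0 < s * (A * B.scaleRoots ε).coeff (i + B.natDegree) := by
  have hc : Continuous fun ε : ℝ => s * ∑ x ∈ Finset.HasAntidiagonal.antidiagonal (i + B.natDegree),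
      A.coeff x.1 * (B.coeff x.2 * ε ^ (B.natDegree - x.2)) := by fun_prop
  simp only [coeff_mul_scaleRoots]
  refine nhdsWithin_le_nhds ((hc.tendsto 0).eventually (lt_mem_nhds ?_))
  rw [Finset.sum_eq_single (i, B.natDegree)]
  · simpa using h
  · rintro ⟨x, y⟩ hxy hne
    rw [Finset.HasAntidiagonal.mem_antidiagonal] at hxy
    simp only at hxy ⊢
    rcases lt_trichotomy y B.natDegree with hy | hy | hy
    · rw [zero_pow (by omega)]; simp
    · exact absurd (by ext <;> simp <;> omega) hne
    · rw [coeff_eq_zero_of_natDegree_lt hy]; simp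
  · intro h; simp at h

open Filter Topology in
/-- For small `ε`, the coefficients of `A * B.scaleRoots ε` of degree at most `deg B` have the signs of
the corresponding ones of `A(0) B`. -/
theorem eventually_coeff_low (A B : ℝ[X]) {m : ℕ} (hm : m ≤ B.natDegree) (s : ℝ)
    (h : 0 < s * (A.coeff 0 * B.coeff m)) :
    ∀ᶠ ε in 𝓝[>] (0 : ℝ), 0 < s * (A * B.scaleRoots ε).coeff m := by
  have hc : Continuous fun ε : ℝ => s * ∑ x ∈ Finset.HasAntidiagonal.antidiagonal m,
      A.coeff x.1 * (B.coeff x.2 * ε ^ (m - x.2)) := by fun_prop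
  have key : ∀ᶠ ε in 𝓝[>] (0 : ℝ), 0 < s * ∑ x ∈ Finset.HasAntidiagonal.antidiagonal m,
      A.coeff x.1 * (B.coeff x.2 * ε ^ (m - x.2)) := by
    refine nhdsWithin_le_nhds ((hc.tendsto 0).eventually (lt_mem_nhds ?_))
    rw [Finset.sum_eq_single (0, m)]
    · simpa using h
    · rintro ⟨x, y⟩ hxy hne
      rw [Finset.HasAntidiagonal.mem_antidiagonal] at hxy
      simp only at hxy ⊢
      rcases lt_trichotomy y m with hy | hy | hy
      · rw [zero_pow (by omega)]; simp
      · exact absurd (by ext <;> simp <;> omega) hne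
      · omega
    · intro h; simp at h
  -- the coefficient is `ε ^ (deg B - m)` times the sum in `key`
  filter_upwards [key, self_mem_nhdsWithin] with ε h1 h2
  have h3 := mul_pos (pow_pos (Set.mem_Ioi.1 h2) (B.natDegree - m)) h1
  rw [coeff_mul_scaleRoots]
  refine h3.trans_eq ?_
  rw [mul_left_comm, Finset.mul_sum]
  congr 1
  refine Finset.sum_congr rfl fun x hx => ?_
  rw [Finset.HasAntidiagonal.mem_antidiagonal] at hx
  have : B.natDegree - x.2 = (B.natDegree - m) + (m - x.2) := by omega
  rw [this, pow_add]
  ring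

open Filter Topology in
theorem eventually_disjoint (S T : Multiset ℝ) (hS : ∀ x ∈ S, x ≠ 0) :
    ∀ᶠ ε in 𝓝[>] (0 : ℝ), ∀ x ∈ S.toFinset, ∀ y ∈ T.toFinset, x ≠ ε * y := by
  rw [Filter.eventually_all_finset]
  intro x hx
  rw [Filter.eventually_all_finset]
  intro y _
  have hc : Continuous fun ε : ℝ => ε * y := by fun_prop
  refine nhdsWithin_le_nhds ((hc.tendsto 0).eventually_ne ?_ |>.mono fun ε h => h.symm)
  simpa using (hS x (Multiset.mem_toFinset.1 hx)).symm

open Filter Topology in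
/-- Concatenation: multiply by a polynomial whose roots have been scaled to be very small. -/
theorem RealW.append {u v : List Bool} {p n p' n' : ℕ} (hu : RealW u p n) (hv : RealW v p' n') :
    RealW (u ++ v) (p + p') (n + n') := by
  obtain ⟨A, hAd, hAs, hAp, hAn, hAnd⟩ := hu
  obtain ⟨B, hBd, hBs, hBp, hBn, hBnd⟩ := hv
  have hBl : 0 < B.leadingCoeff := by
    have := hBs 0 (Nat.zero_le _)
    rw [sgn_zero, Nat.sub_zero, ← hBd] at this
    simpa using this
  have hA0 : 0 < (sgn u u.length : ℝ) * A.coeff 0 := by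
    have := hAs u.length le_rfl
    rwa [Nat.sub_self] at this
  have hAne : A ≠ 0 := by rintro rfl; simp at hA0
  have hBne : B ≠ 0 := by rintro rfl; simp at hBl
  have hsign : ∀ i ∈ Finset.range (u.length + v.length + 1), ∀ᶠ ε in 𝓝[>] (0 : ℝ),
      0 < (sgn (u ++ v) i : ℝ) * (A * B.scaleRoots ε).coeff (u.length + v.length - i) := by
    intro i hi
    rw [Finset.mem_range] at hi
    rcases le_or_gt i u.length with h | h
    · have e : u.length + v.length - i = (u.length - i) + B.natDegree := by omega
      rw [e, sgn_append_left u v h]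
      apply eventually_coeff_high
      rw [← mul_assoc]
      exact mul_pos (hAs i h) hBl
    · obtain ⟨j, rfl⟩ := Nat.exists_eq_add_of_le h.le
      have e : u.length + v.length - (u.length + j) = v.length - j := by omega
      rw [e, sgn_append_right]
      apply eventually_coeff_low _ _ (by omega)
      have := mul_pos hA0 (hBs j (by omega))
      push_cast
      linarith
  have hA0root : ∀ x ∈ A.roots, x ≠ 0 := by
    rintro x hx rfl
    rw [mem_roots hAne, IsRoot, ← coeff_zero_eq_eval_zero] at hx
    simp [hx] at hA0
  obtain ⟨ε, ⟨hε1, hε2⟩, hε3⟩ := (((Filter.eventually_all_finset _).2 hsign).and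
    (eventually_disjoint A.roots B.roots hA0root) |>.and self_mem_nhdsWithin).exists
  have hε : 0 < ε := hε3
  have hBε : B.scaleRoots ε ≠ 0 := scaleRoots_ne_zero hBne ε
  have hr : (A * B.scaleRoots ε).roots = A.roots + B.roots.map (fun x => ε * x) := by
    rw [roots_mul (mul_ne_zero hAne hBε), roots_scaleRoots _ (isUnit_iff_ne_zero.2 hε.ne')]
  refine ⟨A * B.scaleRoots ε, ?_, fun i hi => ?_, ?_, ?_, ?_⟩
  · rw [natDegree_mul hAne hBε, natDegree_scaleRoots, hAd, hBd, List.length_append]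
  · rw [List.length_append] at hi ⊢
    exact hε1 i (Finset.mem_range.2 (by omega))
  · rw [hr, Multiset.countP_add, hAp, Multiset.countP_map, ← hBp, Multiset.countP_eq_card_filter]
    simp [mul_pos_iff_of_pos_left hε]
  · rw [hr, Multiset.countP_add, hAn, Multiset.countP_map, ← hBn, Multiset.countP_eq_card_filter]
    have hneg : ∀ a : ℝ, ε * a < 0 ↔ a < 0 := fun a =>
      ⟨fun h => by by_contra! h'; exact absurd (mul_nonneg hε.le h') (not_le.2 h),
        fun h => mul_neg_of_pos_of_neg hε h⟩
    simp [hneg]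
  · rw [hr, Multiset.nodup_add]
    refine ⟨hAnd, hBnd.map (mul_right_injective₀ hε.ne'), ?_⟩
    rw [Multiset.disjoint_left]
    intro x hx hx'
    obtain ⟨y, hy, rfl⟩ := Multiset.mem_map.1 hx'
    exact hε2 _ (Multiset.mem_toFinset.2 hx) y (Multiset.mem_toFinset.2 hy) rfl

/-! ### Explicit realizations of short words -/

/-- The polynomial whose list of coefficients, constant term first, is the given integer list. -/
noncomputable def toP : List ℤ → ℝ[X]
  | [] => 0
  | a :: l => C (a : ℝ) + X * toP l

/-- Coefficientwise sum of integer lists. -/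
def ladd : List ℤ → List ℤ → List ℤ
  | [], m => m
  | a :: l, [] => a :: l
  | a :: l, b :: m => (a + b) :: ladd l m

/-- Product of integer lists, seen as coefficient lists of polynomials. -/
def lmul : List ℤ → List ℤ → List ℤ
  | [], _ => []
  | a :: l, m => ladd (m.map (a * ·)) (0 :: lmul l m)

theorem toP_ladd (l m : List ℤ) : toP (ladd l m) = toP l + toP m := by
  induction l generalizing m with
  | nil => simp [ladd, toP]
  | cons a l ih =>
    cases m with
    | nil => simp [ladd, toP]
    | cons b m => simp only [ladd, toP, ih, Int.cast_add, C_add]; ring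

theorem toP_smul (a : ℤ) (m : List ℤ) : toP (m.map (a * ·)) = C (a : ℝ) * toP m := by
  induction m with
  | nil => simp [toP]
  | cons b m ih => simp only [List.map_cons, toP, ih, Int.cast_mul, C_mul]; ring

theorem toP_lmul (l m : List ℤ) : toP (lmul l m) = toP l * toP m := by
  induction l with
  | nil => simp [lmul, toP]
  | cons a l ih =>
    simp only [lmul, toP_ladd, toP_smul, toP, ih, Int.cast_zero, C_0]; ring

theorem coeff_toP (l : List ℤ) (k : ℕ) : (toP l).coeff k = ((l.getD k 0 : ℤ) : ℝ) := by
  induction l generalizing k with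
  | nil => simp [toP]
  | cons a l ih =>
    cases k with
    | zero => simp [toP]
    | succ k =>
      simp only [toP, coeff_add, coeff_C_succ, coeff_X_mul, zero_add, ih, List.getD_cons_succ]

/-- Coefficients of the product of the `x² + b x + c` over the pairs `(b, c)` in `qs`. -/
def quads (qs : List (ℤ × ℤ)) : List ℤ := qs.foldr (fun q l => lmul [q.2, q.1, 1] l) [1]

/-- Coefficients of the product of the `x - r`, `r ∈ rs`, and of `quads qs`. -/
def expandCert (rs : List ℤ) (qs : List (ℤ × ℤ)) : List ℤ :=
  rs.foldr (fun r l => lmul [-r, 1] l) (quads qs)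

theorem roots_quads (qs : List (ℤ × ℤ)) (h : ∀ q ∈ qs, q.1 * q.1 < 4 * q.2) :
    toP (quads qs) ≠ 0 ∧ (toP (quads qs)).roots = 0 := by
  induction qs with
  | nil => simp [quads, toP]
  | cons q qs ih =>
    obtain ⟨h1, h2⟩ := ih fun q' hq' => h q' (List.mem_cons_of_mem _ hq')
    have e : toP (quads (q :: qs)) = toP [q.2, q.1, 1] * toP (quads qs) := toP_lmul _ _
    have hq : (q.1 : ℝ) * q.1 < 4 * q.2 := by exact_mod_cast h q List.mem_cons_self
    have hev : ∀ x : ℝ, (toP [q.2, q.1, 1]).eval x ≠ 0 := by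
      intro x
      simp only [toP, eval_add, eval_mul, eval_C, eval_X, eval_zero]
      push_cast
      nlinarith [sq_nonneg (2 * x + q.1)]
    have hne : toP [q.2, q.1, 1] ≠ 0 := fun h0 => hev 0 (by rw [h0, eval_zero])
    rw [e]
    refine ⟨mul_ne_zero hne h1, ?_⟩
    rw [roots_mul (mul_ne_zero hne h1), h2, add_zero]
    refine Multiset.eq_zero_of_forall_notMem fun x hx => hev x ?_
    exact (mem_roots hne).1 hx

theorem roots_expandCert (rs : List ℤ) (qs : List (ℤ × ℤ)) (h : ∀ q ∈ qs, q.1 * q.1 < 4 * q.2) :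
    toP (expandCert rs qs) ≠ 0 ∧
      (toP (expandCert rs qs)).roots = (rs : Multiset ℤ).map (fun r : ℤ => (r : ℝ)) := by
  induction rs with
  | nil => simpa [expandCert] using roots_quads qs h
  | cons r rs ih =>
    obtain ⟨h1, h2⟩ := ih
    have e : toP (expandCert (r :: rs) qs) = (X - C (r : ℝ)) * toP (expandCert rs qs) := by
      have e1 : toP (expandCert (r :: rs) qs) = toP [-r, 1] * toP (expandCert rs qs) := toP_lmul _ _
      rw [e1]
      congr 1
      simp [toP]; ring
    have hne := mul_ne_zero (X_sub_C_ne_zero (r : ℝ)) h1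
    rw [e]
    refine ⟨hne, ?_⟩
    rw [roots_mul hne, roots_X_sub_C, h2, ← Multiset.cons_coe, Multiset.map_cons,
      Multiset.singleton_add]

/-- A word together with integer roots and quadratic factors `x² + b x + c`, listed as `(b, c)`, of
a polynomial meant to realize it. -/
structure Cert where
  word : List Bool
  roots : List ℤ
  quad : List (ℤ × ℤ)

/-- Number of positive roots of a certificate. -/
def Cert.pos (t : Cert) : ℕ := t.roots.countP (fun x => decide (0 < x))

/-- Number of negative roots of a certificate. -/
def Cert.neg (t : Cert) : ℕ := t.roots.countP (fun x => decide (x < 0))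

/-- The integer arithmetic to be verified for a certificate: the quadratic factors have negative
discriminant, the roots are distinct, and the coefficients have the signs given by the word. -/
def Cert.Valid (t : Cert) : Prop :=
  (∀ q ∈ t.quad, q.1 * q.1 < 4 * q.2) ∧ t.roots.Nodup ∧
    (expandCert t.roots t.quad).length = t.word.length + 1 ∧
    ∀ i ∈ List.range (t.word.length + 1),
      0 < sgn t.word i * (expandCert t.roots t.quad).getD (t.word.length - i) 0

instance (t : Cert) : Decidable t.Valid := by unfold Cert.Valid; infer_instance

theorem Cert.Valid.realW {t : Cert} (h : t.Valid) : RealW t.word t.pos t.neg := by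
  obtain ⟨hq, hnd, hl, hs⟩ := h
  obtain ⟨hne, hr⟩ := roots_expandCert t.roots t.quad hq
  have hs' : ∀ i ≤ t.word.length,
      0 < (sgn t.word i : ℝ) * (toP (expandCert t.roots t.quad)).coeff (t.word.length - i) := by
    intro i hi
    rw [coeff_toP]
    exact_mod_cast hs i (List.mem_range.2 (by omega))
  refine ⟨toP (expandCert t.roots t.quad), ?_, hs', ?_, ?_, ?_⟩
  · refine natDegree_eq_of_le_of_coeff_ne_zero ?_ ?_
    · rw [natDegree_le_iff_coeff_eq_zero]
      intro N hN
      rw [coeff_toP, List.getD_eq_default _ _ (by omega), Int.cast_zero]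
    · have := hs' 0 (Nat.zero_le _)
      rw [sgn_zero, Nat.sub_zero] at this
      intro h0
      simp [h0] at this
  · rw [hr, Multiset.countP_map, ← Multiset.countP_eq_card_filter]
    simp [Cert.pos]
  · rw [hr, Multiset.countP_map, ← Multiset.countP_eq_card_filter]
    simp [Cert.neg]
  · rw [hr]
    exact Multiset.Nodup.map Int.cast_injective hnd

/-- The short words from which all others are glued. -/
def basics : List Cert :=
  [⟨[true], [1], []⟩,
   ⟨[false], [-1], []⟩,
   ⟨[true, true], [], [(-4, 5)]⟩,
   ⟨[false, false], [], [(2, 8)]⟩,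
   ⟨[true, false, true], [-2], [(-5, 7)]⟩,
   ⟨[false, true, false], [2], [(4, 6)]⟩,
   ⟨[true, false, false, true], [], [(4, 9), (-5, 7)]⟩,
   ⟨[false, true, true, false], [], [(4, 5), (-3, 5)]⟩,
   ⟨[false, true, false, true], [], [(-4, 6), (5, 8)]⟩,
   ⟨[true, false, false, true, false], [-2, -3, -4], [(-10, 26)]⟩,
   ⟨[true, false, false, false, true], [-2], [(-5, 7), (1, 5)]⟩,
   ⟨[false, true, true, true, false], [3], [(5, 7), (-1, 7)]⟩,
   ⟨[false, true, false, false, true], [-5, -6, -7], [(-7, 13)]⟩,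
   ⟨[true, false, false, true, true, true, false], [-11, -21, -23], [(-5, 270), (-52, 688)]⟩,
   ⟨[false, true, true, true, false, false, true], [-10, -11, -15], [(-7, 222), (-17, 73)]⟩]

theorem basics_valid : ∀ t ∈ basics, t.Valid := by decide +kernel

/-! ### Search over the words of length ten -/

/-- Search, with bounded depth `k`, for a way to write `w` as a concatenation of basic words whose
numbers of positive and negative roots sum to `p` and `n`. -/
def glue : ℕ → List Bool → ℕ → ℕ → Bool
  | 0, w, p, n => w.isEmpty && p == 0 && n == 0
  | k + 1, w, p, n => (w.isEmpty && p == 0 && n == 0) || basics.any fun t =>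
      t.word.isPrefixOf w && (decide (t.pos ≤ p) && (decide (t.neg ≤ n) &&
        glue k (w.drop t.word.length) (p - t.pos) (n - t.neg)))

theorem realW_nil : RealW [] 0 0 := ⟨1, by simp, by simp [sgn], by simp [RootData]⟩

theorem realW_of_glue (k : ℕ) : ∀ (w : List Bool) (p n : ℕ), glue k w p n = true → RealW w p n := by
  have hnil : ∀ (w : List Bool) (p n : ℕ), (w.isEmpty && p == 0 && n == 0) = true →
      RealW w p n := by
    intro w p n h
    simp only [Bool.and_eq_true, List.isEmpty_iff, beq_iff_eq] at h
    obtain ⟨⟨rfl, rfl⟩, rfl⟩ := h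
    exact realW_nil
  induction k with
  | zero => exact hnil
  | succ k ih =>
    intro w p n h
    rw [glue, Bool.or_eq_true] at h
    rcases h with h | h
    · exact hnil w p n h
    · obtain ⟨t, ht, h⟩ := List.any_eq_true.1 h
      simp at h
      obtain ⟨⟨v, rfl⟩, hp, hn, h⟩ := h
      rw [List.drop_left] at h
      have := (basics_valid t ht).realW.append (ih _ _ _ h)
      rwa [Nat.add_sub_cancel' hp, Nat.add_sub_cancel' hn] at this

/-- The words, with `neg = 7`, of the couples excluded from the realizability statement. -/
def exceptional : List (List Bool) :=
  [[true, false, false, false, true, false, false, false, false, true],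
   [true, false, false, false, false, true, false, false, false, true],
   [true, false, false, false, true, false, false, false, true, false],
   [false, true, false, false, false, true, false, false, false, true]]

/-- Boolean test of `f` on all words obtained by putting `k` letters in front of `acc`. -/
def allWords (f : List Bool → Bool) : ℕ → List Bool → Bool
  | 0, acc => f acc
  | k + 1, acc => allWords f k (true :: acc) && allWords f k (false :: acc)

theorem allWords_spec (f : List Bool → Bool) (k : ℕ) : ∀ acc, allWords f k acc = true →
    ∀ w : List Bool, w.length = k → f (w.reverse ++ acc) = true := by
  induction k with
  | zero =>
    intro acc h w hw
    obtain rfl := List.length_eq_zero_iff.1 hw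
    simpa [allWords] using h
  | succ k ih =>
    intro acc h w hw
    simp only [allWords, Bool.and_eq_true] at h
    cases w with
    | nil => simp at hw
    | cons b w =>
      have hw' : w.length = k := by simpa using hw
      cases b with
      | true => simpa using ih _ h.1 w hw'
      | false => simpa using ih _ h.2 w hw'

/-- For a word `w` of length ten with an odd number of changes, every odd `n` not exceeding the number
of preservations is either obtained by gluing, with `pos = 1`, or is `7` with `w` exceptional. -/
def goodWord (w : List Bool) : Bool :=
  (w.count true % 2 == 0) || (List.range (10 - w.count true + 1)).all fun n =>
    (n % 2 == 0) || ((n == 7 && exceptional.contains w) || glue 10 w 1 n)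

theorem allWords_good : allWords goodWord 10 [] = true := by decide +kernel

/-! ### From words to sign patterns -/

/-- The string of signs starting with `s` whose changes and preservations are spelled by a word. -/
def pat : ℝ → List Bool → List ℝ
  | s, [] => [s]
  | s, b :: w => s :: pat (if b then -s else s) w

theorem length_pat (s : ℝ) (w : List Bool) : (pat s w).length = w.length + 1 := by
  induction w generalizing s with
  | nil => rfl
  | cons b w ih => simp [pat, ih]

theorem getElem_pat (s : ℝ) (w : List Bool) (i : ℕ) (hi : i < (pat s w).length) :
    (pat s w)[i] = s * sgn w i := by
  induction w generalizing s i with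
  | nil =>
    obtain rfl : i = 0 := by simpa [pat] using hi
    simp [pat, sgn]
  | cons b w ih =>
    cases i with
    | zero => simp [pat, sgn]
    | succ i =>
      simp only [pat, List.getElem_cons_succ, ih, sgn]
      cases b <;> simp

theorem RealW.realizable {w : List Bool} {p n : ℕ} (h : RealW w p n) :
    Realizable (pat 1 w) p n := by
  obtain ⟨Q, hd, hs, hr⟩ := h
  refine ⟨Q, ⟨by rw [length_pat, hd], fun i => ?_⟩, hr⟩
  have hi : (i : ℕ) ≤ w.length := Nat.lt_succ_iff.1 (i.2.trans_eq (length_pat 1 w))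
  rw [List.get_eq_getElem, getElem_pat, one_mul, hd]
  exact hs i hi

theorem exists_pat (σ : List ℝ) (s : ℝ) (hs : s = 1 ∨ s = -1) (h : ∀ x ∈ σ, x = 1 ∨ x = -1) :
    ∃ w : List Bool, w.length = σ.length ∧ s :: σ = pat s w := by
  induction σ generalizing s with
  | nil => exact ⟨[], rfl, rfl⟩
  | cons t σ ih =>
    have ht := h t List.mem_cons_self
    obtain ⟨w, hw, e⟩ := ih t ht fun x hx => h x (List.mem_cons_of_mem _ hx)
    have hst : t = s ∨ t = -s := by
      rcases hs with rfl | rfl <;> rcases ht with rfl | rfl <;> simp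
    rcases hst with rfl | rfl
    · exact ⟨false :: w, by simp [hw], by simp [pat, e]⟩
    · exact ⟨true :: w, by simp [hw], by simp [pat, e]⟩

theorem signChanges_pat (w : List Bool) (s : ℝ) (hs : s ≠ 0) :
    signChanges (pat s w) = w.count true := by
  induction w generalizing s with
  | nil => simp [signChanges, pat]
  | cons b w ih =>
    have hs' : (if b then -s else s) ≠ 0 := by cases b <;> simp [hs]
    rw [pat]
    have key : ∀ t : ℝ, t ≠ 0 → signChanges (s :: pat t w) =
        signChanges (pat t w) + if s * t < 0 then 1 else 0 := by
      intro t _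
      cases w with
      | nil => by_cases h : s * t < 0 <;> simp [pat, signChanges, h]
      | cons b' w => simp [pat, signChanges, List.countP_cons]
    rw [key _ hs', ih _ hs']
    cases b with
    | true => simp [hs]
    | false =>
      have : ¬ s * s < 0 := not_lt.2 (mul_self_nonneg s)
      simp [this]

theorem imPat_pat (w : List Bool) : imPat (pat 1 w) = pat 1 (w.map not) := by
  apply List.ext_getElem
  · simp [imPat, length_pat]
  · intro i h1 h2
    have hi : i ≤ w.length := by rw [length_pat, List.length_map] at h2; omega
    simp only [imPat, List.getElem_mapIdx, getElem_pat, one_mul]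
    rw [sgn_map_not w hi]
    push_cast
    ring

theorem count_true_map_not (w : List Bool) :
    (w.map not).count true = w.length - w.count true := by
  induction w with
  | nil => rfl
  | cons b w ih =>
    have := List.count_le_length (a := true) (l := w)
    cases b
    · simp [ih]; omega
    · simp [ih]

theorem realW_or_exceptional (w : List Bool) (hw : w.length = 10) (n : ℕ)
    (hc : ¬ Even (w.count true)) (hn : ¬ Even n) (hle : n ≤ 10 - w.count true) :
    RealW w 1 n ∨ (n = 7 ∧ w ∈ exceptional) := by
  have h := allWords_spec goodWord 10 [] allWords_good w.reverse (by simp [hw])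
  rw [List.append_nil, List.reverse_reverse, goodWord, Bool.or_eq_true] at h
  rcases h with h | h
  · exact absurd (Nat.even_iff.2 (by simpa using h)) hc
  · have h' := List.all_eq_true.1 h n (List.mem_range.2 (by omega))
    simp only [Bool.or_eq_true, Bool.and_eq_true, beq_iff_eq, List.contains_iff_mem] at h'
    rcases h' with h' | h' | h'
    · exact absurd (Nat.even_iff.2 h') hn
    · exact Or.inr h'
    · exact Or.inl (realW_of_glue _ _ _ _ h')

theorem sigmaPat_1451 : sigmaPat [1, 4, 5, 1] =
    pat 1 [true, false, false, false, true, false, false, false, false, true] := by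
  simp [sigmaPat, altBlocks, pat, List.replicate]

theorem sigmaPat_1442 : sigmaPat [1, 4, 4, 2] =
    pat 1 [true, false, false, false, true, false, false, false, true, false] := by
  simp [sigmaPat, altBlocks, pat, List.replicate]

theorem irPat_1451 : irPat (sigmaPat [1, 4, 5, 1]) =
    pat 1 [true, false, false, false, false, true, false, false, false, true] := by
  simp [sigmaPat, altBlocks, pat, irPat, List.replicate, List.getLastD]

theorem irPat_1442 : irPat (sigmaPat [1, 4, 4, 2]) =
    pat 1 [false, true, false, false, false, true, false, false, false, true] := by
  simp [sigmaPat, altBlocks, pat, irPat, List.replicate, List.getLastD]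

/-- The exceptional words are those of `Σ_{1,4,5,1}`, `Σ_{1,4,4,2}` and their images under `i_r`. -/
theorem orbit_of_exceptional {w : List Bool} (h : w ∈ exceptional) :
    ∃ C ∈ [((sigmaPat [1, 4, 5, 1], 1, 7) : Couple), (sigmaPat [1, 4, 4, 2], 1, 7)],
      (pat 1 w, 1, 7) = C ∨ (pat 1 w, 1, 7) = irC C := by
  simp only [exceptional, List.mem_cons, List.not_mem_nil, or_false] at h
  rcases h with rfl | rfl | rfl | rfl
  · exact ⟨_, List.mem_cons_self, Or.inl (by rw [sigmaPat_1451])⟩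
  · exact ⟨_, List.mem_cons_self, Or.inr (by rw [irC, irPat_1451])⟩
  · exact ⟨_, List.mem_cons_of_mem _ List.mem_cons_self, Or.inl (by rw [sigmaPat_1442])⟩
  · exact ⟨_, List.mem_cons_of_mem _ List.mem_cons_self, Or.inr (by rw [irC, irPat_1442])⟩

theorem realW_of_not_orbit (w : List Bool) (hw : w.length = 10) (n : ℕ)
    (hc : ¬ Even (w.count true)) (hn : ¬ Even n) (hle : n ≤ 10 - w.count true)
    (h : ∀ C ∈ [((sigmaPat [1, 4, 5, 1], 1, 7) : Couple), (sigmaPat [1, 4, 4, 2], 1, 7)],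
      (pat 1 w, 1, n) ≠ C ∧ (pat 1 w, 1, n) ≠ irC C) : RealW w 1 n := by
  rcases realW_or_exceptional w hw n hc hn hle with h' | ⟨rfl, h'⟩
  · exact h'
  · obtain ⟨C, hC, h1 | h1⟩ := orbit_of_exceptional h'
    · exact absurd h1 (h C hC).1
    · exact absurd h1 (h C hC).2

theorem stmt2 :
    ¬ Realizable (sigmaPat [1, 4, 5, 1]) 1 7 ∧
    ∀ (σ : List ℝ) (pos neg : ℕ),
      IsSignPatternList σ → σ.length = 11 → Admissible σ pos neg →
      min pos neg = 1 →
      ¬ SameOrbit (sigmaPat [1, 4, 5, 1], 1, 7) (σ, pos, neg) →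
      ¬ SameOrbit (sigmaPat [1, 4, 4, 2], 1, 7) (σ, pos, neg) →
      Realizable σ pos neg := by
  refine ⟨not_realizable_1451, fun σ pos neg hσ hlen hadm hmin h1 h2 => ?_⟩
  obtain ⟨w, hw, rfl⟩ : ∃ w : List Bool, w.length = 10 ∧ σ = pat 1 w := by
    obtain ⟨hhead, hall⟩ := hσ
    cases σ with
    | nil => simp at hlen
    | cons s σ =>
      obtain rfl : s = 1 := by simpa using hhead
      obtain ⟨w, hw, e⟩ := exists_pat σ 1 (Or.inl rfl) fun x hx =>
        hall x (List.mem_cons_of_mem _ hx)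
      exact ⟨w, by simpa [hw] using hlen, e⟩
  obtain ⟨hp, hn, ep, en⟩ := hadm
  rw [signChanges_pat w 1 one_ne_zero] at hp hn ep en
  rw [hlen] at hn en
  have hcount := List.count_le_length (a := true) (l := w)
  have horb : ∀ C ∈ [((sigmaPat [1, 4, 5, 1], 1, 7) : Couple), (sigmaPat [1, 4, 4, 2], 1, 7)],
      ¬ SameOrbit C (pat 1 w, pos, neg) := by
    simpa using ⟨h1, h2⟩
  rw [Nat.even_iff] at ep en
  have hcase : pos = 1 ∨ neg = 1 := by omega
  rcases hcase with rfl | rfl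
  · refine (realW_of_not_orbit w hw neg ?_ ?_ (by omega)
      fun C hC => ⟨fun h => ?_, fun h => ?_⟩).realizable
    · rw [Nat.even_iff]; omega
    · rw [Nat.even_iff]; omega
    · exact horb C hC (Or.inl h)
    · exact horb C hC (Or.inr (Or.inr (Or.inl h)))
  · -- the image of the couple under `i_m` has `pos = 1`
    have him : ∀ D : Couple, (pat 1 (w.map not), 1, pos) = D → (pat 1 w, pos, 1) = imC D := by
      rintro _ rfl
      simp [imC, imPat_pat, show not ∘ not = id from funext Bool.not_not]
    have hR : RealW (w.map not) 1 pos := by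
      have hc := count_true_map_not w
      refine realW_of_not_orbit _ (by simpa using hw) pos ?_ ?_ (by omega)
        fun C hC => ⟨fun h => ?_, fun h => ?_⟩
      · rw [Nat.even_iff]; omega
      · rw [Nat.even_iff]; omega
      · exact horb C hC (Or.inr (Or.inl (him _ h)))
      · exact horb C hC (Or.inr (Or.inr (Or.inr (him _ h))))
    have := hR.map_not.realizable
    rwa [List.map_map, show not ∘ not = id from funext Bool.not_not, List.map_id] at this
end
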